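/- arXiv:2304.05859 — 2 statements merged into one kernel-verified Lean document; each statement's English description precedes it below -/
import Mathlib

section
/- Let G be a planar graph. Let s be the number of edges whose both endpoints have degree at most 2, and h the number of vertices of degree at least 3. Then s + h ≤ 3ν(G). -/
/-- A graph is planar if it has a topological embedding in the plane: vertices
are distinct points, edges are injective continuous arcs joining their
endpoints whose interiors avoid vertices, and distinct edges meet only at
common endpoints. -/
def SimpleGraph.IsPlanar {V : Type*} (G : SimpleGraph V) : Prop :=
  ∃ (pos : V → ℝ × ℝ) (γ : ∀ ⦃u v : V⦄, G.Adj u v → unitInterval → ℝ × ℝ),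
    Function.Injective pos ∧
    (∀ ⦃u v : V⦄ (h : G.Adj u v),
      Continuous (γ h) ∧ Function.Injective (γ h) ∧
      γ h 0 = pos u ∧ γ h 1 = pos v) ∧
    (∀ ⦃u v : V⦄ (h : G.Adj u v) (t : unitInterval),
      γ h.symm (unitInterval.symm t) = γ h t) ∧
    (∀ ⦃u v : V⦄ (h : G.Adj u v) (t : unitInterval),
      t ≠ 0 → t ≠ 1 → ∀ w : V, γ h t ≠ pos w) ∧
    (∀ ⦃u v u' v' : V⦄ (h : G.Adj u v) (h' : G.Adj u' v') (t t' : unitInterval),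
      s(u, v) ≠ s(u', v') → γ h t = γ h' t' → t = 0 ∨ t = 1)


namespace PlanarAux

abbrev F2 := ZMod 2
abbrev Px := ℤ × ℤ

def nb (p : Px) : Finset Px := {(p.1+1,p.2), (p.1-1,p.2), (p.1,p.2+1), (p.1,p.2-1)}

lemma mem_nb {p q : Px} : q ∈ nb p ↔ q = (p.1+1,p.2) ∨ q = (p.1-1,p.2) ∨ q = (p.1,p.2+1) ∨ q = (p.1,p.2-1) := by
  simp [nb]

lemma nb_symm {p q : Px} (h : q ∈ nb p) : p ∈ nb q := by
  rw [mem_nb] at *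
  rcases p with ⟨a,b⟩; rcases q with ⟨c,d⟩
  simp only [Prod.mk.injEq] at *
  omega

lemma nb_irrefl {p : Px} : p ∉ nb p := by
  rw [mem_nb]
  rcases p with ⟨a,b⟩
  simp only [Prod.mk.injEq]
  omega

def bd (w : Px → Px → F2) (p : Px) : F2 := ∑ q ∈ nb p, w p q

lemma bd_expand (w : Px → Px → F2) (p : Px) : bd w p =
    w p (p.1+1,p.2) + (w p (p.1-1,p.2) + (w p (p.1,p.2+1) + w p (p.1,p.2-1))) := by
  unfold bd nb
  rw [Finset.sum_insert, Finset.sum_insert, Finset.sum_insert, Finset.sum_singleton]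
  all_goals
    simp only [Finset.mem_insert, Finset.mem_singleton, Prod.mk.injEq]
    omega

def fl (p q : Px) : Px := (max p.1 q.1, max p.2 q.2)
def fr (p q : Px) : Px := (min p.1 q.1 + 1, min p.2 q.2 + 1)

lemma fl_comm (p q : Px) : fl p q = fl q p := by simp [fl, max_comm]
lemma fr_comm (p q : Px) : fr p q = fr q p := by simp [fr, min_comm]

def dd (φ : Px → F2) (p q : Px) : F2 := if q ∈ nb p then φ (fl p q) + φ (fr p q) else 0

lemma dd_symm (φ : Px → F2) (p q : Px) : dd φ p q = dd φ q p := by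
  unfold dd
  rw [fl_comm, fr_comm]
  by_cases h : q ∈ nb p
  · rw [if_pos h, if_pos (nb_symm h)]
  · rw [if_neg h, if_neg (fun h' => h (nb_symm h'))]

lemma f2_self (a : F2) : a + a = 0 := CharTwo.add_self_eq_zero a

lemma bd_dd (φ : Px → F2) (p : Px) : bd (dd φ) p = 0 := by
  rcases p with ⟨i, j⟩
  rw [bd_expand]
  unfold dd
  rw [if_pos (by simp [nb]), if_pos (by simp [nb]), if_pos (by simp [nb]), if_pos (by simp [nb])]
  have e1 : max i (i+1) = i+1 := by omega
  have e2 : min i (i+1) = i := by omega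
  have e3 : max i (i-1) = i := by omega
  have e4 : min i (i-1) = i-1 := by omega
  have e5 : max j (j+1) = j+1 := by omega
  have e6 : min j (j+1) = j := by omega
  have e7 : max j (j-1) = j := by omega
  have e8 : min j (j-1) = j-1 := by omega
  simp only [fl, fr, e1, e2, e3, e4, e5, e6, e7, e8, max_self, min_self, sub_add_cancel]
  generalize φ (i+1, j) = a
  generalize φ (i+1, j+1) = b
  generalize φ (i, j) = c
  generalize φ (i, j+1) = d
  revert a b c d
  decide

lemma antider (h : ℤ → F2) : ∃ Φ : ℤ → F2, ∀ j, Φ (j+1) = Φ j + h j := by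
  refine ⟨fun j => (∑ k ∈ Finset.Ico 0 j, h k) - ∑ k ∈ Finset.Ico j 0, h k, fun j => ?_⟩
  rcases le_or_gt 0 j with hj | hj
  · have : Finset.Ico (0:ℤ) (j+1) = insert j (Finset.Ico 0 j) := by
      ext x; simp; omega
    simp only [this]
    rw [Finset.sum_insert (by simp), Finset.Ico_eq_empty_of_le hj, Finset.Ico_eq_empty_of_le (by omega : (0:ℤ) ≤ j+1)]
    simp [add_comm]
  · have : Finset.Ico j (0:ℤ) = insert j (Finset.Ico (j+1) 0) := by
      ext x; simp; omega
    simp only [this]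
    rw [Finset.sum_insert (by simp), Finset.Ico_eq_empty_of_le hj.le, Finset.Ico_eq_empty_of_le (by omega : j+1 ≤ (0:ℤ))]
    simp only [Finset.sum_empty, zero_sub, CharTwo.neg_eq]
    rw [add_comm (h j), add_assoc, f2_self, add_zero]

lemma exact_grid (w : Px → Px → F2) (hs : ∀ p q, w p q = w q p) (hb : ∀ p, bd w p = 0) :
    ∃ φ : Px → F2, ∀ p q, q ∈ nb p → w p q = φ (fl p q) + φ (fr p q) := by
  -- column antiderivatives
  choose Φ hΦ using fun i : ℤ => antider (fun j => w (i-1, j) (i, j))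
  obtain ⟨c, hc⟩ := antider (fun i => w (i, 0) (i, 1) + Φ i 1 + Φ (i+1) 1)
  have key : ∀ i j : ℤ, (Φ i (j+1) + c i) + (Φ (i+1) (j+1) + c (i+1)) = w (i,j) (i,j+1) := by
    intro i j
    have step : ∀ j : ℤ, (Φ i (j+1) + c i) + (Φ (i+1) (j+1) + c (i+1)) + w (i,j) (i,j+1)
        = (Φ i (j+1+1) + c i) + (Φ (i+1) (j+1+1) + c (i+1)) + w (i,j+1) (i,j+1+1) := by
      intro j
      have hbb := hb (i, j+1)
      rw [bd_expand] at hbb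
      simp only [add_sub_cancel_right] at hbb
      rw [hs (i, j+1) (i-1, j+1), hs (i,j+1) (i,j)] at hbb
      rw [hΦ i (j+1), hΦ (i+1) (j+1)]
      simp only [add_sub_cancel_right]
      generalize Φ i (j+1) = a at *
      generalize Φ (i+1) (j+1) = b at *
      generalize w (i-1, j+1) (i, j+1) = x at *
      generalize w (i, j+1) (i+1, j+1) = y at *
      generalize w (i, j) (i, j+1) = z at *
      generalize w (i, j+1) (i, j+1+1) = t at *
      generalize c i = u
      generalize c (i+1) = u'
      clear hΦ hc hb hs
      revert a b x y z t u u'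
      decide
    have zero : ∀ j : ℤ, (Φ i (j+1) + c i) + (Φ (i+1) (j+1) + c (i+1)) + w (i,j) (i,j+1) = 0 := by
      intro j
      induction j using Int.induction_on with
      | zero =>
        rw [hc i]
        simp only [zero_add]
        generalize Φ i 1 = a
        generalize Φ (i+1) 1 = b
        generalize w (i,0) (i,1) = x
        generalize c i = y
        clear step hΦ hc hb hs
        revert a b x y
        decide
      | succ n ih => rw [← step]; exact ih
      | pred n ih =>
        rw [step]
        simpa using ih
    have := zero j
    exact CharTwo.add_eq_zero.mp this
  have hor : ∀ i j : ℤ, w (i,j) (i+1,j) = (Φ (i+1) j + c (i+1)) + (Φ (i+1) (j+1) + c (i+1)) := by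
    intro i j
    rw [hΦ (i+1) j]
    simp only [add_sub_cancel_right]
    generalize Φ (i+1) j = a
    generalize w (i,j) (i+1,j) = x
    generalize c (i+1) = y
    clear key hΦ hc hb hs
    revert a x y
    decide
  refine ⟨fun f => Φ f.1 f.2 + c f.1, ?_⟩
  rintro ⟨i, j⟩ q hq
  have e1 : ∀ i : ℤ, max i (i+1) = i+1 := by intro i; omega
  have e2 : ∀ i : ℤ, min i (i+1) = i := by intro i; omega
  have e3 : ∀ i : ℤ, max i (i-1) = i := by intro i; omega
  have e4 : ∀ i : ℤ, min i (i-1) = i-1 := by intro i; omega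
  rw [mem_nb] at hq
  rcases hq with rfl | rfl | rfl | rfl
  · simp only [fl, fr, e1, e2, max_self, min_self]
    exact hor i j
  · simp only [fl, fr, e3, e4, max_self, min_self, sub_add_cancel]
    have := hor (i-1) j
    simp only [sub_add_cancel] at this
    rw [hs]; exact this
  · simp only [fl, fr, e1, e2, max_self, min_self]
    exact (key i j).symm
  · simp only [fl, fr, e3, e4, max_self, min_self, sub_add_cancel]
    have := key i (j-1)
    simp only [sub_add_cancel] at this
    rw [hs]; exact this.symm

/-- elementary edge -/
def el (x y p q : Px) : F2 := (if p = x ∧ q = y then 1 else 0) + (if p = y ∧ q = x then 1 else 0)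

lemma el_symm (x y p q : Px) : el x y p q = el x y q p := by
  unfold el
  rw [add_comm]
  simp only [and_comm]

lemma bd_el {x y : Px} (h : y ∈ nb x) (p : Px) :
    bd (el x y) p = (if p = x then 1 else 0) + (if p = y then 1 else 0) := by
  unfold bd el
  rw [Finset.sum_add_distrib]
  congr 1
  · by_cases hp : p = x
    · subst hp; simp [h]
    · simp [hp]
  · by_cases hp : p = y
    · subst hp; simp [nb_symm h]
    · simp [hp]

lemma bd_add (w w' : Px → Px → F2) (p : Px) : bd (fun a b => w a b + w' a b) p = bd w p + bd w' p := by
  simp [bd, Finset.sum_add_distrib]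

lemma bd_smul (c : F2) (w : Px → Px → F2) (p : Px) : bd (fun a b => c * w a b) p = c * bd w p := by
  simp [bd, Finset.mul_sum]

lemma bd_sum {ι : Type*} (s : Finset ι) (w : ι → Px → Px → F2) (p : Px) :
    bd (fun a b => ∑ i ∈ s, w i a b) p = ∑ i ∈ s, bd (w i) p := by
  simp only [bd]
  rw [Finset.sum_comm]

def Conn (S : Set Px) : Prop := ∀ p ∈ S, ∀ q ∈ S,
  Relation.ReflTransGen (fun x y => y ∈ nb x ∧ x ∈ S ∧ y ∈ S) p q

lemma path_lift {S : Set Px} {p q : Px} 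
    (h : Relation.ReflTransGen (fun x y => y ∈ nb x ∧ x ∈ S ∧ y ∈ S) p q) :
    ∃ w : Px → Px → F2, (∀ a b, w a b = w b a) ∧ (∀ a b, w a b ≠ 0 → b ∈ nb a ∧ a ∈ S ∧ b ∈ S) ∧
      ∀ x, bd w x = (if x = p then 1 else 0) + (if x = q then 1 else 0) := by
  induction h with
  | refl => exact ⟨fun _ _ => 0, by simp, by simp, fun x => by rw [f2_self]; simp [bd]⟩
  | @tail y z _ hyz ih =>
    obtain ⟨w, h1, h2, h3⟩ := ih
    refine ⟨fun a b => w a b + el y z a b, ?_, ?_, ?_⟩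
    · intro a b; beta_reduce; rw [h1, el_symm]
    · intro a b hab
      beta_reduce at hab
      by_cases hw : w a b = 0
      · rw [hw, zero_add] at hab
        unfold el at hab
        by_cases c1 : a = y ∧ b = z
        · rw [c1.1, c1.2]; exact hyz
        · by_cases c2 : a = z ∧ b = y
          · rw [c2.1, c2.2]; exact ⟨nb_symm hyz.1, hyz.2.2, hyz.2.1⟩
          · simp [c1, c2] at hab
      · exact h2 a b hw
    · intro x
      rw [bd_add, h3, bd_el hyz.1]
      generalize (if x = p then (1:F2) else 0) = a
      generalize (if x = y then (1:F2) else 0) = b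
      generalize (if x = z then (1:F2) else 0) = c
      revert a b c
      decide

lemma lift_conn {S : Finset Px} (hS : Conn (S : Set Px)) (f : Px → F2) (hf : ∑ p ∈ S, f p = 0) :
    ∃ w : Px → Px → F2, (∀ a b, w a b = w b a) ∧ (∀ a b, w a b ≠ 0 → b ∈ nb a ∧ a ∈ S ∧ b ∈ S) ∧
      ∀ x, bd w x = if x ∈ S then f x else 0 := by
  rcases S.eq_empty_or_nonempty with rfl | ⟨p0, hp0⟩
  · exact ⟨fun _ _ => 0, by simp, by simp, by simp [bd]⟩
  · choose! w h1 h2 h3 using fun p (hp : p ∈ S) => path_lift (hS p hp p0 hp0)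
    refine ⟨fun a b => ∑ p ∈ S, f p * w p a b, ?_, ?_, ?_⟩
    · intro a b
      exact Finset.sum_congr rfl fun p hp => by rw [h1 p hp]
    · intro a b hab
      obtain ⟨p, hp, hne⟩ := Finset.exists_ne_zero_of_sum_ne_zero hab
      exact h2 p hp a b (right_ne_zero_of_mul hne)
    · intro x
      rw [bd_sum]
      simp only [bd_smul]
      rw [Finset.sum_congr rfl fun p hp => by rw [h3 p hp, mul_add]]
      rw [Finset.sum_add_distrib, ← Finset.sum_mul, hf, zero_mul, add_zero]
      simp

lemma sum_sym_zero (s : Finset Px) (w : Px → Px → F2) (hs : ∀ a b, w a b = w b a)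
    (h0 : ∀ a, w a a = 0) : ∑ p ∈ s, ∑ q ∈ s, w p q = 0 := by
  induction s using Finset.induction_on with
  | empty => simp
  | insert a s ha ih =>
    rw [Finset.sum_insert ha, Finset.sum_insert ha, h0, zero_add]
    rw [Finset.sum_congr rfl fun p _ => Finset.sum_insert ha]
    rw [Finset.sum_add_distrib, ih, add_zero]
    rw [Finset.sum_congr rfl fun p _ => hs p a]
    exact f2_self _

end PlanarAux

namespace PlanarAux

lemma count_lemma {E Q : Type*} [Fintype E] [DecidableEq E] [DecidableEq Q] (W : Submodule F2 (E → F2))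
    (s : Finset Q) (z : Q → E → F2) (hz : ∀ q ∈ s, z q ∈ W)
    (hspan : ∀ g ∈ W, ∃ c : Q → F2, ∀ e, g e = ∑ q ∈ s, c q * z q e)
    (h4 : ∀ g ∈ W, g ≠ 0 → 4 ≤ (Finset.univ.filter fun e => g e ≠ 0).card)
    (h2 : ∀ e, (s.filter fun q => z q e ≠ 0).card ≤ 2) :
    4 * Module.finrank F2 W ≤ 2 * Fintype.card E := by
  classical
  set s' := s.filter fun q => z q ≠ 0 with hs'
  have h1 : Module.finrank F2 W ≤ s'.card := by
    have hle : W ≤ Submodule.span F2 ((s'.image z : Finset (E → F2)) : Set (E → F2)) := by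
      intro g hg
      obtain ⟨c, hc⟩ := hspan g hg
      have : g = ∑ q ∈ s, c q • z q := by
        ext e; rw [hc e]; simp
      rw [this]
      refine Submodule.sum_mem _ fun q hq => ?_
      by_cases h0 : z q = 0
      · simp [h0]
      · refine Submodule.smul_mem _ _ (Submodule.subset_span ?_)
        simp only [Finset.coe_image, Set.mem_image, Finset.mem_coe]
        exact ⟨q, by simp [hs', hq, h0], rfl⟩
    calc Module.finrank F2 W ≤ _ := Submodule.finrank_mono hle
      _ ≤ (s'.image z).card := finrank_span_finset_le_card _
      _ ≤ _ := Finset.card_image_le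
  have h3 : ∑ q ∈ s', (Finset.univ.filter fun e => z q e ≠ 0).card ≤ 2 * Fintype.card E := by
    calc ∑ q ∈ s', (Finset.univ.filter fun e => z q e ≠ 0).card
        = ∑ e : E, (s'.filter fun q => z q e ≠ 0).card := by
          simp only [Finset.card_filter]
          rw [Finset.sum_comm]
      _ ≤ ∑ e : E, 2 := Finset.sum_le_sum fun e _ => 
          (Finset.card_le_card (Finset.filter_subset_filter _ (Finset.filter_subset _ _))).trans (h2 e)
      _ = _ := by simp [mul_comm]
  have h5 : s'.card * 4 ≤ ∑ q ∈ s', (Finset.univ.filter fun e => z q e ≠ 0).card := by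
    rw [← smul_eq_mul, ]
    refine Finset.card_nsmul_le_sum _ _ _ fun q hq => ?_
    rw [hs', Finset.mem_filter] at hq
    exact h4 _ (hz q hq.1) hq.2
  omega

lemma f2_ite_sum_exists {E : Type*} [Fintype E] [DecidableEq E] (g : E → F2) (P : E → Prop) [DecidablePred P]
    (h : ∑ e, g e * (if P e then 1 else 0) = 0) (e : E) (he : P e) (hg : g e ≠ 0) :
    ∃ e', e' ≠ e ∧ P e' ∧ g e' ≠ 0 := by
  by_contra hcon
  push Not at hcon
  rw [Finset.sum_eq_single e] at h
  · simp [he] at h; exact hg h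
  · intro b _ hb
    by_cases hP : P b
    · simp [hcon b hb hP]
    · simp [hP]
  · simp

theorem grid_bound {α β : Type*} [Fintype α] [Fintype β] [DecidableEq α] [DecidableEq β]
    (E : Finset (α × β)) (S : α ⊕ β → Finset Px)
    (disj : ∀ u v p, p ∈ S u → p ∈ S v → u = v) (conn : ∀ v, Conn (S v : Set Px))
    (cross : ∀ e ∈ E, ∃ p ∈ S (Sum.inl e.1), ∃ q ∈ S (Sum.inr e.2), q ∈ nb p) :
    E.card ≤ 2 * (Fintype.card α + Fintype.card β) := by
  classical
  choose px hpx qx hqx hadj using fun e : E => cross e.1 e.2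
  let T : (E → F2) →ₗ[F2] (α ⊕ β → F2) :=
    { toFun := fun g v => ∑ e : E, g e * ((if Sum.inl e.1.1 = v then 1 else 0) + (if Sum.inr e.1.2 = v then 1 else 0))
      map_add' := by intro f g; ext v; simp [add_mul, Finset.sum_add_distrib]
      map_smul' := by intro c g; ext v; simp [Finset.mul_sum, mul_assoc] }
  have hT : ∀ g v, T g v = ∑ e : E, g e * ((if Sum.inl e.1.1 = v then 1 else 0) + (if Sum.inr e.1.2 = v then 1 else 0)) := fun g v => rfl
  let w0 : (E → F2) → Px → Px → F2 := fun g p q => ∑ e : E, g e * el (px e) (qx e) p q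
  have w0_symm : ∀ g p q, w0 g p q = w0 g q p := by
    intro g p q
    exact Finset.sum_congr rfl fun e _ => by rw [el_symm]
  have w0_ne : ∀ g p q, w0 g p q ≠ 0 → ∃ e, (p = px e ∧ q = qx e) ∨ (p = qx e ∧ q = px e) := by
    intro g p q h
    obtain ⟨e, -, he⟩ := Finset.exists_ne_zero_of_sum_ne_zero h
    refine ⟨e, ?_⟩
    have := right_ne_zero_of_mul he
    by_contra hc
    push Not at hc
    apply this
    unfold el
    rw [if_neg (fun h => hc.1 h.1 h.2), if_neg (fun h => hc.2 h.1 h.2), add_zero]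
  have w0_val : ∀ g e, w0 g (px e) (qx e) = g e := by
    intro g e
    have hinj : ∀ e', px e = px e' → qx e = qx e' → e = e' := by
      intro e' h1 h2
      have a1 := disj _ _ _ (hpx e) (h1 ▸ hpx e')
      have a2 := disj _ _ _ (hqx e) (h2 ▸ hqx e')
      exact Subtype.ext (Prod.ext (Sum.inl_injective a1) (Sum.inr_injective a2))
    have hcross : ∀ e', px e ≠ qx e' := by
      intro e' h
      have := disj _ _ _ (hpx e) (h ▸ hqx e')
      simp at this
    show ∑ e' : E, g e' * el (px e') (qx e') (px e) (qx e) = g e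
    rw [Finset.sum_eq_single e]
    · unfold el
      simp [hcross e]
    · intro b _ hb
      unfold el
      rw [if_neg (fun h => hb (hinj b h.1 h.2).symm), if_neg (fun h => hcross _ h.1)]
      simp
    · simp
  have w0_bd : ∀ g p, bd (w0 g) p = ∑ e : E, g e * ((if p = px e then 1 else 0) + (if p = qx e then 1 else 0)) := by
    intro g p
    show bd (fun p q => ∑ e : E, g e * el (px e) (qx e) p q) p = _
    rw [bd_sum Finset.univ (fun e p q => g e * el (px e) (qx e) p q)]
    exact Finset.sum_congr rfl fun e _ => by rw [bd_smul, bd_el (hadj e)]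
  have hpS : ∀ e v, px e ∈ S v ↔ Sum.inl e.1.1 = v := fun e v =>
    ⟨fun h => disj _ _ _ (hpx e) h, fun h => h ▸ hpx e⟩
  have hqS : ∀ e v, qx e ∈ S v ↔ Sum.inr e.1.2 = v := fun e v =>
    ⟨fun h => disj _ _ _ (hqx e) h, fun h => h ▸ hqx e⟩
  have hsum : ∀ g v, ∑ p ∈ S v, bd (w0 g) p = T g v := by
    intro g v
    rw [hT]
    simp only [w0_bd]
    rw [Finset.sum_comm]
    refine Finset.sum_congr rfl fun e _ => ?_
    rw [← Finset.mul_sum, Finset.sum_add_distrib]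
    simp only [Finset.sum_ite_eq', hpS, hqS]
  let Kept : Px → Px → Prop := fun p q => (∃ v, p ∈ S v ∧ q ∈ S v) ∨ ∃ e, (p = px e ∧ q = qx e) ∨ (p = qx e ∧ q = px e)
  let r : Px → Px → Prop := fun f g => ∃ p q, q ∈ nb p ∧ ¬ Kept p q ∧ f = fl p q ∧ g = fr p q
  -- even subgraphs of the grid on kept edges project to the kernel of T
  have evn : ∀ w : Px → Px → F2, (∀ p q, w p q = w q p) → (∀ p q, w p q ≠ 0 → q ∈ nb p ∧ Kept p q) →
      (∀ p, bd w p = 0) → T (fun e => w (px e) (qx e)) = 0 := by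
    intro w hs hk hb
    ext v
    rw [← hsum]
    set g : E → F2 := fun e => w (px e) (qx e) with hg
    let w1 : Px → Px → F2 := fun p q => w p q + w0 g p q
    have w1s : ∀ p q, w1 p q = w1 q p := fun p q => by
      show w p q + w0 g p q = w q p + w0 g q p
      rw [hs, w0_symm]
    have w1c : ∀ e, w1 (px e) (qx e) = 0 := fun e => by
      show w (px e) (qx e) + w0 g (px e) (qx e) = 0
      rw [w0_val]; exact f2_self _
    have w1k : ∀ p q, w1 p q ≠ 0 → q ∈ nb p ∧ ∃ v, p ∈ S v ∧ q ∈ S v := by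
      intro p q h
      have hk' : q ∈ nb p ∧ Kept p q := by
        by_cases hw : w p q = 0
        · have : w0 g p q ≠ 0 := by
            intro h'; apply h; show w p q + w0 g p q = 0; rw [hw, h', add_zero]
          obtain ⟨e, he⟩ := w0_ne _ _ _ this
          refine ⟨?_, Or.inr ⟨e, he⟩⟩
          rcases he with ⟨rfl, rfl⟩ | ⟨rfl, rfl⟩
          · exact hadj e
          · exact nb_symm (hadj e)
        · exact hk _ _ hw
      refine ⟨hk'.1, ?_⟩
      rcases hk'.2 with h1 | ⟨e, ⟨rfl, rfl⟩ | ⟨rfl, rfl⟩⟩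
      · exact h1
      · exact absurd (w1c e) h
      · rw [w1s] at h; exact absurd (w1c e) h
    have hbd : ∀ p, bd (w0 g) p = bd w1 p := by
      intro p
      have : bd w1 p = bd w p + bd (w0 g) p := bd_add _ _ _
      rw [this, hb, zero_add]
    rw [Finset.sum_congr rfl fun p _ => hbd p]
    have : ∀ p ∈ S v, bd w1 p = ∑ q ∈ S v, w1 p q := by
      intro p hp
      unfold bd
      rw [← Finset.sum_filter_ne_zero, ← Finset.sum_filter_ne_zero (s := S v)]
      congr 1
      ext q
      simp only [Finset.mem_filter]
      constructor
      · rintro ⟨_, h⟩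
        obtain ⟨_, v', h1, h2⟩ := w1k p q h
        have := disj _ _ _ hp h1
        subst this
        exact ⟨h2, h⟩
      · rintro ⟨_, h⟩
        exact ⟨(w1k p q h).1, h⟩
    rw [Finset.sum_congr rfl this]
    rw [sum_sym_zero _ _ w1s]
    · rfl
    · intro a
      by_contra h
      exact nb_irrefl (w1k a a h).1
  have lift : ∀ g, T g = 0 → ∃ w : Px → Px → F2, (∀ p q, w p q = w q p) ∧ 
      (∀ p q, w p q ≠ 0 → Kept p q) ∧ (∀ p, bd w p = 0) ∧ ∀ e, w (px e) (qx e) = g e := by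
    intro g hg
    choose u u1 u2 u3 using fun v => lift_conn (conn v) (bd (w0 g)) (by rw [hsum, hg]; rfl)
    refine ⟨fun p q => w0 g p q + ∑ v, u v p q, ?_, ?_, ?_, ?_⟩
    · intro p q
      beta_reduce
      rw [w0_symm, Finset.sum_congr rfl fun v _ => u1 v p q]
    · intro p q h
      beta_reduce at h
      by_cases h0 : w0 g p q = 0
      · rw [h0, zero_add] at h
        obtain ⟨v, -, hv⟩ := Finset.exists_ne_zero_of_sum_ne_zero h
        exact Or.inl ⟨v, (u2 v p q hv).2⟩
      · exact Or.inr (w0_ne _ _ _ h0)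
    · intro p
      rw [bd_add (w0 g) (fun p q => ∑ v, u v p q), bd_sum Finset.univ u, Finset.sum_congr rfl fun v _ => u3 v p]
      by_cases hp : ∃ v, p ∈ S v
      · obtain ⟨v, hv⟩ := hp
        rw [Finset.sum_eq_single v, if_pos hv]
        · exact f2_self _
        · intro v' _ hne
          rw [if_neg]
          intro h; exact hne (disj _ _ _ h hv)
        · simp
      · push Not at hp
        simp only [hp, if_false, Finset.sum_const_zero, add_zero]
        rw [w0_bd]
        refine Finset.sum_eq_zero fun e _ => ?_
        rw [if_neg (fun h => hp _ (h ▸ hpx e)), if_neg (fun h => hp _ (h ▸ hqx e))]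
        simp
    · intro e
      beta_reduce
      rw [w0_val, Finset.sum_eq_zero, add_zero]
      intro v _
      by_contra h
      obtain ⟨_, h1, h2⟩ := u2 v _ _ h
      have := (hpS e v).1 h1
      have h' := (hqS e v).1 h2
      rw [← this] at h'
      simp at h'
  let z : Quot r → E → F2 := fun q e => (if Quot.mk r (fl (px e) (qx e)) = q then 1 else 0) + (if Quot.mk r (fr (px e) (qx e)) = q then 1 else 0)
  let s : Finset (Quot r) := Finset.univ.image (fun e : E => Quot.mk r (fl (px e) (qx e))) ∪ Finset.univ.image (fun e : E => Quot.mk r (fr (px e) (qx e)))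
  have hcount := count_lemma (LinearMap.ker T) s z ?_ ?_ ?_ ?_
  · have := LinearMap.finrank_range_add_finrank_ker T
    have h2 : Module.finrank F2 (LinearMap.range T) ≤ Module.finrank F2 (α ⊕ β → F2) := Submodule.finrank_le _
    rw [Module.finrank_fintype_fun_eq_card] at this h2
    rw [Fintype.card_sum] at h2
    rw [Fintype.card_coe] at this hcount
    omega
  · intro q _
    rw [LinearMap.mem_ker]
    let φ : Px → F2 := fun f => if Quot.mk r f = q then 1 else 0
    have := evn (dd φ) (dd_symm φ) ?_ (bd_dd φ)
    · rw [← this]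
      congr 1
      ext e
      simp only [dd, hadj e, if_true]
      rfl
    · intro p q' h
      have h1 : q' ∈ nb p := by
        by_contra h'; apply h; simp [dd, h']
      refine ⟨h1, ?_⟩
      by_contra hk
      apply h
      have : Quot.mk r (fl p q') = Quot.mk r (fr p q') := Quot.sound ⟨p, q', h1, hk, rfl, rfl⟩
      simp only [dd, h1, if_true, φ, this]
      exact f2_self _
  · intro g hg
    obtain ⟨w, hw1, hw2, hw3, hw4⟩ := lift g hg
    obtain ⟨φ, hφ⟩ := exact_grid w hw1 hw3
    let Φ : Quot r → F2 := Quot.lift φ (by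
      rintro f f' ⟨p, q, h1, h2, rfl, rfl⟩
      have h3 := hφ p q h1
      have h4 : w p q = 0 := by
        by_contra h; exact h2 (hw2 _ _ h)
      rw [h4] at h3
      exact CharTwo.add_eq_zero.mp h3.symm)
    refine ⟨Φ, fun e => ?_⟩
    rw [← hw4, hφ _ _ (hadj e)]
    simp only [z, mul_add, Finset.sum_add_distrib, mul_ite, mul_one, mul_zero, Finset.sum_ite_eq]
    rw [if_pos, if_pos]
    · exact Finset.mem_union_right _ (Finset.mem_image_of_mem _ (Finset.mem_univ e))
    · exact Finset.mem_union_left _ (Finset.mem_image_of_mem _ (Finset.mem_univ e))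
  · intro g hg hne
    have hA : ∀ a, ∑ e : E, g e * (if e.1.1 = a then 1 else 0) = 0 := by
      intro a
      have := congrFun (LinearMap.mem_ker.1 hg) (Sum.inl a)
      rw [hT] at this
      simpa using this
    have hB : ∀ b, ∑ e : E, g e * (if e.1.2 = b then 1 else 0) = 0 := by
      intro b
      have := congrFun (LinearMap.mem_ker.1 hg) (Sum.inr b)
      rw [hT] at this
      simpa using this
    obtain ⟨e0, he0⟩ := Function.ne_iff.1 hne
    obtain ⟨e1, h11, h12, h13⟩ := f2_ite_sum_exists g _ (hA e0.1.1) e0 rfl he0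
    obtain ⟨e2, h21, h22, h23⟩ := f2_ite_sum_exists g _ (hB e0.1.2) e0 rfl he0
    obtain ⟨e3, h31, h32, h33⟩ := f2_ite_sum_exists g _ (hB e1.1.2) e1 rfl h13
    have hd1 : e1.1.2 ≠ e0.1.2 := fun h => h11 (Subtype.ext (Prod.ext h12 h))
    have hd2 : e2.1.1 ≠ e0.1.1 := fun h => h21 (Subtype.ext (Prod.ext h h22))
    have hd3 : e3.1.1 ≠ e1.1.1 := fun h => h31 (Subtype.ext (Prod.ext h h32))
    have hc : ({e0, e1, e2, e3} : Finset E).card = 4 := by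
      rw [Finset.card_insert_of_notMem, Finset.card_insert_of_notMem, Finset.card_insert_of_notMem, Finset.card_singleton]
      · simp only [Finset.mem_singleton]; rintro rfl; exact hd1 (h32.symm.trans h22)
      · simp only [Finset.mem_insert, Finset.mem_singleton, not_or]
        exact ⟨fun h => hd2 (h ▸ h12), fun h => h31 h.symm⟩
      · simp only [Finset.mem_insert, Finset.mem_singleton, not_or]
        exact ⟨fun h => h11 h.symm, fun h => h21 h.symm, fun h => hd1 (by rw [← h32, h])⟩
    rw [← hc]
    refine Finset.card_le_card fun e he => ?_
    simp only [Finset.mem_insert, Finset.mem_singleton] at he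
    simp only [Finset.mem_filter, Finset.mem_univ, true_and]
    rcases he with rfl | rfl | rfl | rfl <;> assumption
  · intro e
    refine (Finset.card_le_card (t := {Quot.mk r (fl (px e) (qx e)), Quot.mk r (fr (px e) (qx e))}) ?_).trans Finset.card_le_two
    intro q hq
    rw [Finset.mem_filter] at hq
    by_contra h
    simp only [Finset.mem_insert, Finset.mem_singleton, not_or] at h
    apply hq.2
    simp [z, Ne.symm h.1, Ne.symm h.2]

end PlanarAux

namespace PlanarAux
open Relation

def pt (ε : ℝ) (p : Px) : ℝ × ℝ := (ε * p.1, ε * p.2)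

def pix (ε : ℝ) (K : Set (ℝ × ℝ)) : Set Px := {p | ∃ x ∈ K, dist x (pt ε p) < ε}

lemma pix_mono {ε : ℝ} {K K' : Set (ℝ × ℝ)} (h : K ⊆ K') : pix ε K ⊆ pix ε K' :=
  fun _ ⟨x, hx, hd⟩ => ⟨x, h hx, hd⟩

lemma exists_pix {ε : ℝ} (hε : 0 < ε) (x : ℝ × ℝ) : ∃ p : Px, dist x (pt ε p) < ε := by
  have key : ∀ y : ℝ, dist y (ε * (⌊y / ε⌋ : ℤ)) < ε := by
    intro y
    have h1 := Int.floor_le (y / ε)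
    have h2 := Int.lt_floor_add_one (y / ε)
    rw [le_div_iff₀ hε] at h1
    rw [div_lt_iff₀ hε] at h2
    rw [Real.dist_eq, abs_lt]
    constructor <;> nlinarith
  refine ⟨(⌊x.1 / ε⌋, ⌊x.2 / ε⌋), ?_⟩
  rw [Prod.dist_eq, max_lt_iff]
  exact ⟨key _, key _⟩

lemma pix_finite {ε : ℝ} (hε : 0 < ε) {K : Set (ℝ × ℝ)} (hK : IsCompact K) : (pix ε K).Finite := by
  obtain ⟨M, hM⟩ := hK.isBounded.subset_closedBall 0
  set n : ℤ := ⌈M / ε + 1⌉ with hn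
  refine ((Set.finite_Icc (-n) n).prod (Set.finite_Icc (-n) n)).subset ?_
  have hn' : M + ε ≤ ε * n := by
    have := Int.le_ceil (M / ε + 1)
    rw [← hn] at this
    calc M + ε = ε * (M / ε + 1) := by field_simp
      _ ≤ _ := by gcongr
  have key : ∀ (y : ℝ) (i : ℤ), dist y 0 ≤ M → dist y (ε * i) < ε → i ∈ Set.Icc (-n) n := by
    intro y i h1 h2
    rw [Real.dist_eq, sub_zero, abs_le] at h1
    rw [Real.dist_eq, abs_lt] at h2
    have a1 : ε * (i:ℝ) ≤ ε * n := by linarith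
    have a2 : ε * (-(n:ℝ)) ≤ ε * i := by linarith
    have b1 := le_of_mul_le_mul_left a1 hε
    have b2 := le_of_mul_le_mul_left a2 hε
    exact ⟨by exact_mod_cast b2, by exact_mod_cast b1⟩
  rintro p ⟨x, hx, hd⟩
  have hx' := hM hx
  rw [Metric.mem_closedBall, Prod.dist_eq, max_le_iff] at hx'
  rw [Prod.dist_eq, max_lt_iff] at hd
  exact ⟨key _ _ hx'.1 hd.1, key _ _ hx'.2 hd.2⟩

lemma conn_reach {N : Set Px} {p0 : Px} :
    Conn {q | ReflTransGen (fun x y => y ∈ nb x ∧ x ∈ N ∧ y ∈ N) p0 q} := by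
  set X := {q | ReflTransGen (fun x y => y ∈ nb x ∧ x ∈ N ∧ y ∈ N) p0 q} with hX
  have h1 : ∀ q, ReflTransGen (fun x y => y ∈ nb x ∧ x ∈ N ∧ y ∈ N) p0 q → 
      ReflTransGen (fun x y => y ∈ nb x ∧ x ∈ X ∧ y ∈ X) p0 q := by
    intro q hq
    induction hq with
    | refl => exact .refl
    | tail hab hbc ih => exact ih.tail ⟨hbc.1, hab, hab.tail hbc⟩
  intro p hp q hq
  refine ReflTransGen.trans ?_ (h1 q hq)
  have h2 : ∀ q, ReflTransGen (fun x y => y ∈ nb x ∧ x ∈ X ∧ y ∈ X) p0 q →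
      ReflTransGen (fun x y => y ∈ nb x ∧ x ∈ X ∧ y ∈ X) q p0 := by
    intro q hq
    induction hq with
    | refl => exact .refl
    | tail hab hbc ih => exact ReflTransGen.head ⟨nb_symm hbc.1, hbc.2.2, hbc.2.1⟩ ih
  exact h2 p (h1 p hp)

lemma int_close {ε : ℝ} (hε : 0 < ε) {y : ℝ} {i j : ℤ} (h1 : dist y (ε * i) < ε)
    (h2 : dist y (ε * j) < ε) : i = j ∨ j = i + 1 ∨ j = i - 1 := by
  rw [Real.dist_eq, abs_lt] at h1 h2
  have a1 : ε * (i:ℝ) < ε * (j + 2) := by linarith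
  have a2 : ε * (j:ℝ) < ε * (i + 2) := by linarith
  have b1 : i < j + 2 := by exact_mod_cast lt_of_mul_lt_mul_left a1 hε.le
  have b2 : j < i + 2 := by exact_mod_cast lt_of_mul_lt_mul_left a2 hε.le
  omega

lemma pix_conn {ε : ℝ} (hε : 0 < ε) {K : Set (ℝ × ℝ)} (hK : IsPreconnected K) : Conn (pix ε K) := by
  intro p hp q hq
  by_contra hcon
  set X := {q | ReflTransGen (fun x y => y ∈ nb x ∧ x ∈ pix ε K ∧ y ∈ pix ε K) p q} with hX
  have := hK (⋃ r ∈ X, Metric.ball (pt ε r) ε) (⋃ r ∈ Xᶜ, Metric.ball (pt ε r) ε)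
    (isOpen_biUnion fun _ _ => Metric.isOpen_ball) (isOpen_biUnion fun _ _ => Metric.isOpen_ball) ?_ ?_ ?_
  · obtain ⟨x, hxK, hx1, hx2⟩ := this
    simp only [Set.mem_iUnion, Metric.mem_ball, exists_prop] at hx1 hx2
    obtain ⟨r, hr, hxr⟩ := hx1
    obtain ⟨r', hr', hxr'⟩ := hx2
    apply hr'
    have hrp : r ∈ pix ε K := ⟨x, hxK, hxr⟩
    have hrp' : r' ∈ pix ε K := ⟨x, hxK, hxr'⟩
    rw [Prod.dist_eq, max_lt_iff] at hxr hxr'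
    have hm : (r.1, r'.2) ∈ pix ε K := ⟨x, hxK, by
      rw [Prod.dist_eq, max_lt_iff]; exact ⟨hxr.1, hxr'.2⟩⟩
    have c1 := int_close hε hxr.1 hxr'.1
    have c2 := int_close hε hxr.2 hxr'.2
    have s1 : (r.1, r'.2) ∈ X := by
      rcases eq_or_ne r (r.1, r'.2) with h | h
      · rw [← h]; exact hr
      · refine ReflTransGen.tail hr ⟨?_, hrp, hm⟩
        rw [mem_nb]
        rcases r with ⟨a, b⟩
        simp only [ne_eq, Prod.mk.injEq, true_and] at h c1 c2 ⊢
        omega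
    rcases eq_or_ne r' (r.1, r'.2) with h | h
    · rw [h]; exact s1
    · refine ReflTransGen.tail s1 ⟨?_, hm, hrp'⟩
      rw [mem_nb]
      rcases r' with ⟨a, b⟩
      simp only [ne_eq, Prod.mk.injEq, and_true] at h c1 c2 ⊢
      omega
  · intro x hx
    obtain ⟨r, hr⟩ := exists_pix hε x
    by_cases h : r ∈ X
    · left; exact Set.mem_biUnion h hr
    · right; exact Set.mem_biUnion (show r ∈ Xᶜ from h) hr
  · obtain ⟨x, hx, hd⟩ := hp
    exact ⟨x, hx, Set.mem_biUnion (show p ∈ X from .refl) hd⟩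
  · obtain ⟨x, hx, hd⟩ := hq
    exact ⟨x, hx, Set.mem_biUnion (show q ∈ Xᶜ from hcon) hd⟩

lemma exit_step {R : Px → Px → Prop} {x y : Px} (h : ReflTransGen R x y) (X : Set Px) (hx : x ∈ X)
    (hy : y ∉ X) : ∃ u v, R u v ∧ u ∈ X ∧ v ∉ X := by
  induction h with
  | refl => exact absurd hx hy
  | @tail b c _ hbc ih =>
    by_cases hb : b ∈ X
    · exact ⟨b, c, hbc, hb, hy⟩
    · exact ih hb

open Filter Topology in
lemma sep_eventually {K K' : Set (ℝ × ℝ)} (hK : IsCompact K) (hK' : IsCompact K') (h : Disjoint K K') :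
    ∀ᶠ ε in 𝓝[>] (0:ℝ), Disjoint (pix ε K) (pix ε K') := by
  obtain ⟨δ, hδ, hd⟩ := h.exists_thickenings hK hK'.isClosed
  have : ∀ᶠ ε in 𝓝[>] (0:ℝ), ε < δ := by
    filter_upwards [Ioo_mem_nhdsGT hδ] with ε hε using hε.2
  filter_upwards [this] with ε hε
  rw [Set.disjoint_left] at hd ⊢
  rintro p ⟨x, hx, hxd⟩ ⟨y, hy, hyd⟩
  refine hd (a := pt ε p) ?_ ?_
  · rw [Metric.mem_thickening_iff]; exact ⟨x, hx, by rw [dist_comm]; linarith⟩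
  · rw [Metric.mem_thickening_iff]; exact ⟨y, hy, by rw [dist_comm]; linarith⟩

set_option maxHeartbeats 2000000 in
open Filter Topology in
theorem planar_bip {V : Type*} [Fintype V] [DecidableEq V] (G : SimpleGraph V) [DecidableRel G.Adj]
    (hpl : G.IsPlanar) (A B : Finset V) (hAB : Disjoint A B) :
    (Finset.univ.filter fun e : A × B => G.Adj e.1 e.2).card ≤ 2 * (A.card + B.card) := by
  classical
  obtain ⟨pos, γ, hinj, hγ, -, hint, hdis⟩ := hpl
  have hne : ∀ (a : A) (b : B), (a:V) ≠ b := fun a b h =>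
    Finset.disjoint_left.1 hAB a.2 (h ▸ b.2)
  have hpos : ∀ ⦃u v : V⦄ (h : G.Adj u v) (t : unitInterval) (w : V), γ h t = pos w →
      (t = 0 ∧ w = u) ∨ (t = 1 ∧ w = v) := by
    intro u v h t w e
    by_cases h0 : t = 0
    · left; refine ⟨h0, ?_⟩
      rw [h0, (hγ h).2.2.1] at e; exact (hinj e).symm
    · by_cases h1 : t = 1
      · right; refine ⟨h1, ?_⟩
        rw [h1, (hγ h).2.2.2] at e; exact (hinj e).symm
      · exact absurd e (hint h t h0 h1 w)
  let hf : unitInterval := ⟨1/2, by norm_num, by norm_num⟩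
  have hf0 : (0 : unitInterval) ≤ hf := unitInterval.nonneg'
  have hf1 : ¬ ((1 : unitInterval) ≤ hf) := by
    rw [← Subtype.coe_le_coe]; simp only [hf]; norm_num
  have hf2 : ¬ (hf ≤ (0 : unitInterval)) := by
    rw [← Subtype.coe_le_coe]; simp only [hf]; norm_num
  let KA : A → Set (ℝ × ℝ) := fun a => {pos a} ∪ ⋃ (b : B), ⋃ (h : G.Adj a b), γ h '' Set.Iic hf
  let KB : B → Set (ℝ × ℝ) := fun b => {pos b} ∪ ⋃ (a : A), ⋃ (h : G.Adj a b), γ h '' Set.Ici hf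
  have memKA : ∀ a x, x ∈ KA a ↔ x = pos a ∨ ∃ (b : B) (h : G.Adj a b) (t : unitInterval), t ≤ hf ∧ γ h t = x := by
    intro a x; simp [KA]
  have memKB : ∀ b x, x ∈ KB b ↔ x = pos b ∨ ∃ (a : A) (h : G.Adj a b) (t : unitInterval), hf ≤ t ∧ γ h t = x := by
    intro a x; simp [KB]
  have cpIic : ∀ ⦃u v⦄ (h : G.Adj u v), IsCompact (γ h '' Set.Iic hf) := fun u v h =>
    isClosed_Iic.isCompact.image (hγ h).1
  have cpIci : ∀ ⦃u v⦄ (h : G.Adj u v), IsCompact (γ h '' Set.Ici hf) := fun u v h =>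
    isClosed_Ici.isCompact.image (hγ h).1
  have cpA : ∀ a, IsCompact (KA a) := fun a =>
    isCompact_singleton.union (isCompact_iUnion fun b => isCompact_iUnion fun h => cpIic h)
  have cpB : ∀ b, IsCompact (KB b) := fun a =>
    isCompact_singleton.union (isCompact_iUnion fun b => isCompact_iUnion fun h => cpIci h)
  have pcB : ∀ b, IsPreconnected (KB b) := by
    intro b
    refine isPreconnected_of_forall (pos b) ?_
    intro y hy
    rw [memKB] at hy
    rcases hy with rfl | ⟨a, h, t, ht, rfl⟩
    · exact ⟨{pos b}, Set.subset_union_left, rfl, rfl, isPreconnected_singleton⟩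
    · refine ⟨γ h '' Set.Ici hf, ?_, ⟨1, unitInterval.le_one', (hγ h).2.2.2⟩, ⟨t, ht, rfl⟩, isPreconnected_Ici.image _ (hγ h).1.continuousOn⟩
      rintro x ⟨s, hs, rfl⟩
      rw [memKB]
      exact Or.inr ⟨a, h, s, hs, rfl⟩
  have d3 : ∀ (a : A) (b : B), pos a ∉ KB b := by
    intro a b hx
    rw [memKB] at hx
    rcases hx with hx | ⟨a', h, t, ht, hx⟩
    · exact hne a b (hinj hx)
    · rcases hpos _ _ _ hx with ⟨rfl, _⟩ | ⟨_, h'⟩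
      · exact hf2 ht
      · exact hne _ _ h'
  have d4 : ∀ (a : A) (b : B) (h : G.Adj a b) (b' : B), b' ≠ b → Disjoint (γ h '' Set.Iic hf) (KB b') := by
    intro a b h b' hbb
    rw [Set.disjoint_left]
    rintro x ⟨t, ht, rfl⟩ hx
    rw [Set.mem_Iic] at ht
    have hx0 := hx
    rw [memKB] at hx
    rcases hx with hx | ⟨a', h', t', ht', hx⟩
    · rcases hpos _ _ _ hx with ⟨_, h'⟩ | ⟨rfl, _⟩
      · exact hne _ _ h'.symm
      · exact hf1 ht
    · have hee : s((a:V), (b:V)) ≠ s((a':V), (b':V)) := by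
        intro he
        rw [Sym2.eq_iff] at he
        rcases he with ⟨_, h2⟩ | ⟨h1, _⟩
        · exact hbb (Subtype.ext h2.symm)
        · exact hne _ _ h1
      rcases hdis h h' t t' hee hx.symm with rfl | rfl
      · rw [(hγ h).2.2.1] at hx0; exact d3 _ _ hx0
      · exact hf1 ht
  have d1 : ∀ a a' : A, a ≠ a' → Disjoint (KA a) (KA a') := by
    intro a a' haa
    have aux : ∀ a a' : A, a ≠ a' → pos a ∉ KA a' := by
      intro a a' haa hx
      rw [memKA] at hx
      rcases hx with hx | ⟨b, h, t, ht, hx⟩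
      · exact haa (Subtype.ext (hinj hx))
      · rcases hpos _ _ _ hx with ⟨_, h'⟩ | ⟨rfl, _⟩
        · exact haa (Subtype.ext h')
        · exact hf1 ht
    rw [Set.disjoint_left]
    intro x hx hx'
    have hx0 := hx'
    rw [memKA] at hx hx'
    rcases hx with rfl | ⟨b, h, t, ht, rfl⟩
    · exact aux _ _ haa hx0
    · rcases hx' with hx' | ⟨b', h', t', ht', hx'⟩
      · rw [hx'] at hx0
        rcases hpos _ _ _ hx' with ⟨_, h'⟩ | ⟨rfl, _⟩
        · exact haa (Subtype.ext h'.symm)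
        · exact hf1 ht
      · have hee : s((a:V), (b:V)) ≠ s((a':V), (b':V)) := by
          intro he
          rw [Sym2.eq_iff] at he
          rcases he with ⟨h1, _⟩ | ⟨h1, _⟩
          · exact haa (Subtype.ext h1)
          · exact hne _ _ h1
        rcases hdis h h' t t' hee hx'.symm with rfl | rfl
        · rw [(hγ h).2.2.1] at hx0; exact aux _ _ haa hx0
        · exact hf1 ht
  have d2 : ∀ b b' : B, b ≠ b' → Disjoint (KB b) (KB b') := by
    intro a a' haa
    have aux : ∀ a a' : B, a ≠ a' → pos a ∉ KB a' := by
      intro a a' haa hx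
      rw [memKB] at hx
      rcases hx with hx | ⟨b, h, t, ht, hx⟩
      · exact haa (Subtype.ext (hinj hx))
      · rcases hpos _ _ _ hx with ⟨rfl, _⟩ | ⟨_, h'⟩
        · exact hf2 ht
        · exact haa (Subtype.ext h')
    rw [Set.disjoint_left]
    intro x hx hx'
    have hx0 := hx'
    rw [memKB] at hx hx'
    rcases hx with rfl | ⟨b, h, t, ht, rfl⟩
    · exact aux _ _ haa hx0
    · rcases hx' with hx' | ⟨b', h', t', ht', hx'⟩
      · rcases hpos _ _ _ hx' with ⟨rfl, _⟩ | ⟨_, h'⟩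
        · exact hf2 ht
        · exact haa (Subtype.ext h'.symm)
      · have hee : s((b:V), (a:V)) ≠ s((b':V), (a':V)) := by
          intro he
          rw [Sym2.eq_iff] at he
          rcases he with ⟨_, h1⟩ | ⟨h1, _⟩
          · exact haa (Subtype.ext h1)
          · exact hne _ _ h1
        rcases hdis h h' t t' hee hx'.symm with rfl | rfl
        · exact hf2 ht
        · rw [(hγ h).2.2.2] at hx0; exact aux _ _ haa hx0
  -- choose the scale
  have ev1 : ∀ᶠ ε in 𝓝[>] (0:ℝ), ∀ a a' : A, a ≠ a' → Disjoint (pix ε (KA a)) (pix ε (KA a')) := by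
    simp only [eventually_all]
    exact fun a a' h => sep_eventually (cpA a) (cpA a') (d1 a a' h)
  have ev2 : ∀ᶠ ε in 𝓝[>] (0:ℝ), ∀ a a' : B, a ≠ a' → Disjoint (pix ε (KB a)) (pix ε (KB a')) := by
    simp only [eventually_all]
    exact fun a a' h => sep_eventually (cpB a) (cpB a') (d2 a a' h)
  have ev3 : ∀ᶠ ε in 𝓝[>] (0:ℝ), ∀ (a : A) (b : B), Disjoint (pix ε {pos a}) (pix ε (KB b)) := by
    simp only [eventually_all]
    exact fun a b => sep_eventually isCompact_singleton (cpB b) (Set.disjoint_singleton_left.2 (d3 a b))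
  have ev4 : ∀ᶠ ε in 𝓝[>] (0:ℝ), ∀ (a : A) (b : B) (h : G.Adj a b) (b' : B), b' ≠ b → 
      Disjoint (pix ε (γ h '' Set.Iic hf)) (pix ε (KB b')) := by
    simp only [eventually_all]
    exact fun a b h b' hb => sep_eventually (cpIic h) (cpB b') (d4 a b h b' hb)
  have ev0 : ∀ᶠ ε in 𝓝[>] (0:ℝ), 0 < ε := eventually_mem_nhdsWithin
  obtain ⟨ε, hε, s1, s2, s3, s4⟩ := (ev0.and (ev1.and (ev2.and (ev3.and ev4)))).exists
  choose p0 hp0 using fun a : A => exists_pix hε (pos a)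
  let N : A → Set Px := fun a => pix ε (KA a) \ ⋃ b, pix ε (KB b)
  let Br : A → Set Px := fun a => {q | ReflTransGen (fun x y => y ∈ nb x ∧ x ∈ N a ∧ y ∈ N a) (p0 a) q}
  have hp0N : ∀ a, p0 a ∈ N a := by
    intro a
    refine ⟨⟨pos a, Or.inl rfl, hp0 a⟩, ?_⟩
    simp only [Set.mem_iUnion, not_exists]
    intro b hb
    exact Set.disjoint_left.1 (s3 a b) ⟨pos a, rfl, hp0 a⟩ hb
  have BrN : ∀ a, Br a ⊆ N a := by
    intro a q hq
    rcases ReflTransGen.cases_tail hq with h | ⟨c, _, h⟩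
    · rw [h]; exact hp0N a
    · exact h.2.2
  let S : A ⊕ B → Set Px := Sum.elim Br (fun b => pix ε (KB b))
  have Sfin : ∀ v, (S v).Finite := by
    rintro (a | b)
    · exact (pix_finite hε (cpA a)).subset ((BrN a).trans Set.sdiff_subset)
    · exact pix_finite hε (cpB b)
  have := grid_bound (Finset.univ.filter fun e : A × B => G.Adj e.1 e.2) (fun v => (Sfin v).toFinset) ?_ ?_ ?_
  · simpa using this
  · intro u v p hu hv
    rw [Set.Finite.mem_toFinset] at hu hv
    rcases u with a | b <;> rcases v with a' | b'
    · by_contra h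
      exact Set.disjoint_left.1 (s1 a a' (fun h' => h (h' ▸ rfl))) (BrN _ hu).1 (BrN _ hv).1
    · exact absurd (Set.mem_iUnion_of_mem b' hv) (BrN _ hu).2
    · exact absurd (Set.mem_iUnion_of_mem b hu) (BrN _ hv).2
    · by_contra h
      exact Set.disjoint_left.1 (s2 b b' (fun h' => h (h' ▸ rfl))) hu hv
  · intro v
    rw [Set.Finite.coe_toFinset]
    rcases v with a | b
    · exact conn_reach
    · exact pix_conn hε (pcB b)
  · rintro ⟨a, b⟩ he
    have h : G.Adj a b := by simpa using he
    obtain ⟨q, hq⟩ := exists_pix hε (γ h hf)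
    have c1 : p0 a ∈ pix ε (γ h '' Set.Iic hf) := ⟨pos a, ⟨0, hf0, (hγ h).2.2.1⟩, hp0 a⟩
    have c2 : q ∈ pix ε (γ h '' Set.Iic hf) := ⟨_, ⟨hf, Set.mem_Iic.2 le_rfl, rfl⟩, hq⟩
    have c3 : q ∈ pix ε (KB b) := ⟨_, (memKB _ _).2 (Or.inr ⟨a, h, hf, le_rfl, rfl⟩), hq⟩
    have cc := pix_conn hε (isPreconnected_Iic.image _ (hγ h).1.continuousOn) _ c1 _ c2
    obtain ⟨u, v, ⟨huv, hu1, hv1⟩, hu, hv⟩ := exit_step cc (Br a) .refl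
      (fun hq' => (BrN a hq').2 (Set.mem_iUnion_of_mem b c3))
    refine ⟨u, by simpa [S] using hu, v, ?_, huv⟩
    have hvN : v ∉ N a := fun h' => hv (ReflTransGen.tail hu ⟨huv, BrN a hu, h'⟩)
    have hvK : v ∈ pix ε (KA a) := pix_mono (by
      rintro x ⟨t, ht, rfl⟩
      exact (memKA _ _).2 (Or.inr ⟨b, h, t, ht, rfl⟩)) hv1
    have hvB : v ∈ ⋃ b, pix ε (KB b) := by
      by_contra h'; exact hvN ⟨hvK, h'⟩
    obtain ⟨b', hb'⟩ := Set.mem_iUnion.1 hvB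
    by_cases hbb : b' = b
    · subst hbb; simpa [S] using hb'
    · exact absurd hb' (Set.disjoint_left.1 (s4 a b h b' hbb) hv1)

end PlanarAux

namespace PlanarAux
section matching
variable {V : Type*} [Fintype V] [DecidableEq V]

def IsInv (G : SimpleGraph V) (W : Finset V) (f : V → V) : Prop :=
  (∀ v, f (f v) = v) ∧ ∀ v, f v ≠ v → G.Adj v (f v) ∧ v ∈ W

def supp (f : V → V) : Finset V := Finset.univ.filter fun v => f v ≠ v


lemma mem_supp {f : V → V} {v : V} : v ∈ supp f ↔ f v ≠ v := by simp [supp]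

lemma even_supp {G : SimpleGraph V} {W : Finset V} {f : V → V} (hf : IsInv G W f) : Even (supp f).card := by
  have : ∑ v ∈ supp f, (1 : ZMod 2) = 0 := by
    refine Finset.sum_involution (fun v _ => f v) ?_ ?_ ?_ ?_
    · intros; decide
    · intro v hv _; exact mem_supp.1 hv
    · intro v hv; rw [mem_supp] at *; rw [hf.1]; exact fun h => hv h.symm
    · intro v _; exact hf.1 v
  rw [Finset.sum_const, nsmul_eq_mul, mul_one] at this
  exact (ZMod.natCast_eq_zero_iff_even).1 this

def IsMax (G : SimpleGraph V) (W : Finset V) (f : V → V) : Prop :=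
  IsInv G W f ∧ ∀ g, IsInv G W g → (supp g).card ≤ (supp f).card

lemma exists_isMax (G : SimpleGraph V) (W : Finset V) : ∃ f, IsMax G W f := by
  classical
  obtain ⟨f, hf, hm⟩ := Finset.exists_max_image (Finset.univ.filter (IsInv G W)) (fun f => (supp f).card)
    ⟨id, by simp [IsInv]⟩
  refine ⟨f, (Finset.mem_filter.1 hf).2, fun g hg => hm g (by simp [hg])⟩

lemma IsMax.card_eq {G : SimpleGraph V} {W : Finset V} {f g : V → V} (hf : IsMax G W f) (hg : IsMax G W g) :
    (supp f).card = (supp g).card := le_antisymm (hg.2 f hf.1) (hf.2 g hg.1)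

def Rl (G : SimpleGraph V) (W : Finset V) (u v : V) : Prop :=
  u = v ∨ ∀ g, IsMax G W g → g u = u → g v ≠ v

lemma Rl.symm' {G : SimpleGraph V} {W : Finset V} {u v : V} (h : Rl G W u v) : Rl G W v u := by
  rcases h with rfl | h
  · exact Or.inl rfl
  · exact Or.inr fun g hg h1 h2 => h g hg h2 h1

lemma add_edge {G : SimpleGraph V} {W : Finset V} {N : V → V} (hN : IsInv G W N) {x y : V} (hx : N x = x) (hy : N y = y)
    (hxy : G.Adj x y) (hxW : x ∈ W) (hyW : y ∈ W) : ∃ N', IsInv G W N' ∧ (supp N).card < (supp N').card := by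
  have hne := hxy.ne
  refine ⟨fun t => if t = x then y else if t = y then x else N t, ⟨?_, ?_⟩, ?_⟩
  · intro v
    have := hN.1 v
    grind
  · intro v hv
    have := hN.2 v
    have := hxy.symm
    grind
  · refine Finset.card_lt_card ?_
    rw [Finset.ssubset_iff]
    refine ⟨x, by simp [mem_supp, hx], ?_⟩
    intro t ht
    rw [Finset.mem_insert] at ht
    simp only [mem_supp] at *
    grind

lemma adj_Rl {G : SimpleGraph V} {W : Finset V} {x y : V} (hxy : G.Adj x y) (hx : x ∈ W) (hy : y ∈ W) : Rl G W x y := by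
  right
  intro g hg h1 h2
  obtain ⟨N', h3, h4⟩ := add_edge hg.1 h1 h2 hxy hx hy
  exact absurd (hg.2 N' h3) (by omega)

lemma swap_edge {G : SimpleGraph V} {W : Finset V} {N M : V → V} (hN : IsInv G W N) (hM : IsInv G W M) {x y z w : V} (hx : N x = x)
    (hxy : M x = y) (hne : y ≠ x) (hy : N y = z) (hyz : z ≠ y) (hw : N w = w) (hwx : w ≠ x) :
    ∃ N', IsInv G W N' ∧ (supp N').card = (supp N).card ∧ N' w = w ∧ 
      (Finset.univ.filter fun t => M t = N t).card < (Finset.univ.filter fun t => M t = N' t).card := by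
  have hzx : z ≠ x := by
    rintro rfl
    have := hN.1 y
    grind
  have hNz : N z = y := by rw [← hy]; exact hN.1 y
  have hMy : M y = x := by rw [← hxy]; exact hM.1 x
  have hadj := hM.2 x (by rw [hxy]; exact hne)
  have hadj' := hM.2 y (by rw [hMy]; exact hne.symm)
  refine ⟨fun t => if t = x then y else if t = y then x else if t = z then z else N t, ⟨?_, ?_⟩, ?_, ?_, ?_⟩
  · intro v
    have := hN.1 v
    grind
  · intro v hv
    have := hN.2 v
    grind
  · have e : supp (fun t => if t = x then y else if t = y then x else if t = z then z else N t) = insert x ((supp N).erase z) := by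
      ext t
      simp only [mem_supp, Finset.mem_insert, Finset.mem_erase]
      grind
    rw [e, Finset.card_insert_of_notMem (by simp [mem_supp, hx]), Finset.card_erase_add_one]
    rw [mem_supp, hNz]; exact hyz.symm
  · grind
  · refine Finset.card_lt_card ?_
    rw [Finset.ssubset_iff]
    refine ⟨x, by simp [hx, hxy, hne], ?_⟩
    intro t ht
    simp only [Finset.mem_insert, Finset.mem_filter, Finset.mem_univ, true_and] at *
    have := hM.1 t
    grind

lemma Rl_trans {G : SimpleGraph V} {W : Finset V} {u w v : V} (hw : ∃ g, IsMax G W g ∧ g w = w)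
    (h1 : Rl G W u w) (h2 : Rl G W w v) : Rl G W u v := by
  classical
  rcases h1 with rfl | h1
  · exact h2
  rcases h2 with rfl | h2
  · exact Or.inr h1
  by_cases huv : u = v
  · exact Or.inl huv
  right
  intro M hM hMu hMv
  obtain ⟨g0, hg0, hg0w⟩ := hw
  obtain ⟨N, hN, hNm⟩ := Finset.exists_max_image (Finset.univ.filter fun N => IsMax G W N ∧ N w = w)
    (fun N => (Finset.univ.filter fun t => M t = N t).card) ⟨g0, by simp [hg0, hg0w]⟩
  simp only [Finset.mem_filter, Finset.mem_univ, true_and] at hN hNm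
  obtain ⟨hN, hNw⟩ := hN
  have hNu : N u ≠ u := fun h => h1 N hN h hNw
  have hNv : N v ≠ v := fun h => h2 N hN hNw h
  have hc : (supp M \ supp N).card = (supp N \ supp M).card :=
    Finset.card_sdiff_comm (hM.card_eq hN)
  have h2c : 2 ≤ (supp N \ supp M).card := by
    rw [← Finset.card_pair huv]
    refine Finset.card_le_card ?_
    intro t ht
    simp only [Finset.mem_insert, Finset.mem_singleton] at ht
    simp only [Finset.mem_sdiff, mem_supp]
    rcases ht with rfl | rfl
    · exact ⟨hNu, fun h => h hMu⟩
    · exact ⟨hNv, fun h => h hMv⟩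
  obtain ⟨x, hx, hxw⟩ := Finset.exists_mem_ne (by omega : 1 < (supp M \ supp N).card) w
  simp only [Finset.mem_sdiff, mem_supp, not_not] at hx
  obtain ⟨hMx, hNx⟩ := hx
  have hadj := hM.1.2 x hMx
  have hMy : M (M x) ≠ M x := by rw [hM.1.1]; exact hMx.symm
  by_cases hy : N (M x) = M x
  · obtain ⟨N', h3, h4⟩ := add_edge hN.1 hNx hy hadj.1 hadj.2 (hM.1.2 _ hMy).2
    exact absurd (hN.2 N' h3) (by omega)
  · obtain ⟨N', h3, h4, h5, h6⟩ := swap_edge hN.1 hM.1 hNx rfl hMx rfl hy hNw hxw.symm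
    have : IsMax G W N' := ⟨h3, fun g hg => by rw [h4]; exact hN.2 g hg⟩
    exact absurd (hNm N' ⟨this, h5⟩) (by omega)

/-- Gallai–Edmonds style structure -/
lemma structure_thm (G : SimpleGraph V) : ∃ (U : Finset V) (f g : V → V), IsMax G Finset.univ f ∧ IsMax G Uᶜ g ∧
    (supp g).card + 2 * U.card ≤ (supp f).card ∧ ∀ v ∈ Uᶜ, ∃ g, IsMax G Uᶜ g ∧ g v = v := by
  classical
  choose m hm using exists_isMax G
  obtain ⟨U, hU, hmax⟩ := Finset.exists_max_image
    (Finset.univ.filter fun U : Finset V => (supp (m Uᶜ)).card + 2 * U.card ≤ (supp (m Finset.univ)).card)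
    (fun U => U.card) ⟨∅, by simp⟩
  simp only [Finset.mem_filter, Finset.mem_univ, true_and] at hU hmax
  refine ⟨U, m Finset.univ, m Uᶜ, hm _, hm _, hU, ?_⟩
  intro v hv
  rw [Finset.mem_compl] at hv
  have hcard : (insert v U).card = U.card + 1 := Finset.card_insert_of_notMem hv
  have h1 : ¬ ((supp (m (insert v U)ᶜ)).card + 2 * (insert v U).card ≤ (supp (m Finset.univ)).card) := by
    intro h
    have := hmax _ h
    omega
  have e1 := even_supp (hm (insert v U)ᶜ).1
  have e2 := even_supp (hm Uᶜ).1
  have hinv : IsInv G Uᶜ (m (insert v U)ᶜ) := by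
    refine ⟨(hm _).1.1, fun t ht => ?_⟩
    have := (hm _).1.2 t ht
    refine ⟨this.1, ?_⟩
    have := this.2
    simp at this ⊢
    exact this.2
  refine ⟨m (insert v U)ᶜ, ⟨hinv, fun g hg => ((hm Uᶜ).2 g hg).trans ?_⟩, ?_⟩
  · obtain ⟨a, ha⟩ := e1
    obtain ⟨b, hb⟩ := e2
    omega
  · by_contra h
    have := ((hm (insert v U)ᶜ).1.2 v h).2
    simp at this

lemma to_subgraph (G : SimpleGraph V) (f : V → V) (hf : IsInv G Finset.univ f) :
    ∃ M : G.Subgraph, M.IsMatching ∧ 2 * M.edgeSet.ncard = (supp f).card := by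
  classical
  let H : SimpleGraph V := { Adj := fun u v => f u = v ∧ u ≠ v
                             symm := ⟨fun u v h => ⟨by rw [← h.1, hf.1], h.2.symm⟩⟩
                             loopless := ⟨fun v h => h.2 rfl⟩ }
  let M : G.Subgraph := { verts := {v | f v ≠ v}
                          Adj := H.Adj
                          adj_sub := by
                            rintro u v ⟨rfl, h⟩
                            exact (hf.2 u h.symm).1
                          edge_vert := by
                            rintro u v ⟨rfl, h⟩
                            exact h.symm
                          symm := H.symm }
  refine ⟨M, ?_, ?_⟩
  · intro v hv
    exact ⟨f v, ⟨rfl, fun h => hv h.symm⟩, fun w hw => hw.1.symm⟩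
  · have e : M.edgeSet = (H.edgeFinset : Set (Sym2 V)) := by
      ext e
      induction e using Sym2.ind with
      | _ x y => simp [M]
    rw [e, Set.ncard_coe_finset, ← SimpleGraph.sum_degrees_eq_twice_card_edges, supp, Finset.card_filter]
    refine Finset.sum_congr rfl fun v _ => ?_
    by_cases hv : f v = v
    · rw [if_neg (by simpa using hv)]
      rw [← SimpleGraph.card_neighborFinset_eq_degree, Finset.card_eq_zero]
      ext w
      simp only [SimpleGraph.mem_neighborFinset, Finset.notMem_empty, iff_false]
      rintro ⟨h1, h2⟩
      exact h2 (hv.symm.trans h1)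
    · rw [if_pos hv]
      rw [← SimpleGraph.card_neighborFinset_eq_degree, Finset.card_eq_one]
      refine ⟨f v, ?_⟩
      ext w
      simp only [SimpleGraph.mem_neighborFinset, Finset.mem_singleton]
      constructor
      · rintro ⟨h1, h2⟩; exact h1.symm
      · rintro rfl; exact ⟨rfl, fun h => hv h.symm⟩
end matching
end PlanarAux

namespace PlanarAux

lemma missed_bound {V : Type*} [Fintype V] [DecidableEq V] (G : SimpleGraph V) (W : Finset V) (g : V → V)
    (hg : IsMax G W g) (hW : ∀ v ∈ W, ∃ g, IsMax G W g ∧ g v = v) (W2 : Finset V)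
    (hW2 : ∀ w ∈ W2, w ∈ W ∧ ∃ w' ∈ W, w' ≠ w ∧ Rl G W w w') : 2 * W2.card ≤ 3 * (supp g).card := by
  classical
  choose! m hmW hmne hmR using fun w hw => (hW2 w hw).2
  set Ms := W2.filter fun w => g w = w with hMs
  have hMs' : ∀ w ∈ Ms, w ∈ W2 ∧ g w = w := fun w hw => by
    rw [hMs, Finset.mem_filter] at hw; exact hw
  have gm : ∀ w ∈ Ms, g (m w) ≠ m w := by
    intro w hw
    rcases hmR w (hMs' w hw).1 with h | h
    · exact absurd h.symm (hmne w (hMs' w hw).1)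
    · exact h g hg (hMs' w hw).2
  have uniq : ∀ w ∈ Ms, ∀ w' ∈ Ms, Rl G W w w' → w = w' := by
    intro w hw w' hw' h
    rcases h with h | h
    · exact h
    · exact absurd (hMs' w' hw').2 (h g hg (hMs' w hw).2)
  have gW : ∀ w ∈ Ms, g (m w) ∈ W := by
    intro w hw
    refine (hg.1.2 (g (m w)) ?_).2
    rw [hg.1.1]; exact (gm w hw).symm
  have gR : ∀ w ∈ Ms, Rl G W w (g (m w)) := by
    intro w hw
    have hw2 := (hMs' w hw).1
    exact Rl_trans (hW _ (hmW w hw2)) (hmR w hw2) (adj_Rl (hg.1.2 _ (gm w hw)).1 (hmW w hw2) (gW w hw))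
  have inj1 : Set.InjOn m Ms := by
    intro w hw w' hw' h
    refine uniq w hw w' hw' (Rl_trans (hW _ (hmW w (hMs' w hw).1)) (hmR w (hMs' w hw).1) ?_)
    rw [h]; exact (hmR w' (hMs' w' hw').1).symm'
  have inj2 : Set.InjOn (fun w => g (m w)) Ms := by
    intro w hw w' hw' h
    refine inj1 hw hw' ?_
    have := congrArg g h
    simpa only [hg.1.1] using this
  have hd : Disjoint (Ms.image m) (Ms.image fun w => g (m w)) := by
    rw [Finset.disjoint_left]
    intro x hx hx'
    obtain ⟨w, hw, rfl⟩ := Finset.mem_image.1 hx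
    obtain ⟨w', hw', h⟩ := Finset.mem_image.1 hx'
    have : w = w' := by
      refine uniq w hw w' hw' (Rl_trans (hW _ (hmW w (hMs' w hw).1)) (hmR w (hMs' w hw).1) ?_)
      rw [← h]; exact (gR w' hw').symm'
    subst this
    exact gm w hw h
  have h1 : 2 * Ms.card ≤ (supp g).card := by
    calc 2 * Ms.card = ((Ms.image m) ∪ (Ms.image fun w => g (m w))).card := by
          rw [Finset.card_union_of_disjoint hd, Finset.card_image_of_injOn inj1, Finset.card_image_of_injOn inj2]
          ring
      _ ≤ _ := by
          refine Finset.card_le_card ?_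
          intro x hx
          rw [mem_supp]
          rcases Finset.mem_union.1 hx with hx | hx
          · obtain ⟨w, hw, rfl⟩ := Finset.mem_image.1 hx
            exact gm w hw
          · obtain ⟨w, hw, rfl⟩ := Finset.mem_image.1 hx
            rw [hg.1.1]; exact (gm w hw).symm
  have h2 : W2.card ≤ Ms.card + (supp g).card := by
    refine (Finset.card_le_card (t := Ms ∪ supp g) ?_).trans (Finset.card_union_le _ _)
    intro w hw
    by_cases h : g w = w
    · exact Finset.mem_union_left _ (Finset.mem_filter.2 ⟨hw, h⟩)
    · exact Finset.mem_union_right _ (mem_supp.2 h)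
  omega

theorem main_count {V : Type*} [Fintype V] [DecidableEq V] (G : SimpleGraph V) [DecidableRel G.Adj] (hpl : G.IsPlanar)
    (U : Finset V) (g : V → V) (hg : IsMax G Uᶜ g) (hW : ∀ v ∈ Uᶜ, ∃ g, IsMax G Uᶜ g ∧ g v = v) :
    2 * (({e : Sym2 V | e ∈ G.edgeSet ∧ ∀ v ∈ e, G.degree v ≤ 2} : Set (Sym2 V)).ncard +
        ({v : V | 3 ≤ G.degree v} : Set V).ncard) ≤ 6 * U.card + 3 * (supp g).card := by
  classical
  let H : SimpleGraph V := { Adj := fun x y => G.Adj x y ∧ G.degree x ≤ 2 ∧ G.degree y ≤ 2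
                             symm := ⟨fun x y h => ⟨h.1.symm, h.2.2, h.2.1⟩⟩
                             loopless := ⟨fun v h => h.1.ne rfl⟩ }
  have hH : ∀ x y, H.Adj x y ↔ G.Adj x y ∧ G.degree x ≤ 2 ∧ G.degree y ≤ 2 := fun x y => Iff.rfl
  have eS : ({e : Sym2 V | e ∈ G.edgeSet ∧ ∀ v ∈ e, G.degree v ≤ 2} : Set (Sym2 V)) = (H.edgeFinset : Set (Sym2 V)) := by
    ext e
    induction e using Sym2.ind with
    | _ x y => simp [hH]
  have eH : ({v : V | 3 ≤ G.degree v} : Set V) = ((Finset.univ.filter fun v => 3 ≤ G.degree v : Finset V) : Set V) := by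
    ext v; simp
  rw [eS, eH, Set.ncard_coe_finset, Set.ncard_coe_finset, mul_add, ← SimpleGraph.sum_degrees_eq_twice_card_edges]
  set W := Uᶜ with hWdef
  set W2 := W.filter fun w => ∃ w' ∈ W, w' ≠ w ∧ Rl G W w w' with hW2
  have b1 := missed_bound G W g hg hW W2 (fun w hw => Finset.mem_filter.1 hw)
  set B := W.filter fun w => 3 ≤ G.degree w ∧ ¬ ∃ w' ∈ W, w' ≠ w ∧ Rl G W w w' with hB
  have adjW2 : ∀ x ∈ W, ∀ y ∈ W, G.Adj x y → ∃ w' ∈ W, w' ≠ x ∧ Rl G W x w' := 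
    fun x hx y hy h => ⟨y, hy, h.ne.symm, adj_Rl h hx hy⟩
  set Uh := U.filter fun u => 3 ≤ G.degree u with hUh
  set Ul := U.filter fun u => ¬ 3 ≤ G.degree u with hUl
  have hUc : Uh.card + Ul.card = U.card := Finset.card_filter_add_card_filter_not _
  set W2h := W2.filter fun u => 3 ≤ G.degree u with hW2h
  set W2l := W2.filter fun u => ¬ 3 ≤ G.degree u with hW2l
  have hW2c : W2h.card + W2l.card = W2.card := Finset.card_filter_add_card_filter_not _
  -- high vertices
  have bh : (Finset.univ.filter fun v => 3 ≤ G.degree v).card ≤ Uh.card + W2h.card + B.card := by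
    refine (Finset.card_le_card (t := (Uh ∪ W2h) ∪ B) ?_).trans 
      ((Finset.card_union_le _ _).trans (Nat.add_le_add_right (Finset.card_union_le _ _) _))
    intro v hv
    have hv := (Finset.mem_filter.1 hv).2
    by_cases hU : v ∈ U
    · exact Finset.mem_union_left _ (Finset.mem_union_left _ (Finset.mem_filter.2 ⟨hU, hv⟩))
    · have hvW : v ∈ W := Finset.mem_compl.2 hU
      by_cases h2 : ∃ w' ∈ W, w' ≠ v ∧ Rl G W v w'
      · exact Finset.mem_union_left _ (Finset.mem_union_right _ (Finset.mem_filter.2 ⟨Finset.mem_filter.2 ⟨hvW, h2⟩, hv⟩))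
      · exact Finset.mem_union_right _ (Finset.mem_filter.2 ⟨hvW, hv, h2⟩)
  -- shallow edges
  let a : V → V → ℕ := fun x y => if H.Adj x y then 1 else 0
  have ha : ∀ x, H.degree x = ∑ y, a x y := by
    intro x
    rw [← SimpleGraph.card_neighborFinset_eq_degree, SimpleGraph.neighborFinset_eq_filter, Finset.card_filter]
  have hsplit : ∀ F : V → ℕ, ∑ x, F x = ∑ x ∈ U, F x + ∑ x ∈ W, F x := fun F =>
    (Finset.sum_add_sum_compl U F).symm
  have asymm : ∀ x y, a x y = a y x := fun x y => by simp only [a, H.adj_comm]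
  have bs : ∑ x, H.degree x ≤ 2 * W2l.card + 2 * ∑ u ∈ U, H.degree u := by
    rw [hsplit]
    have e1 : ∑ x ∈ W, H.degree x = ∑ x ∈ W, ∑ y ∈ U, a x y + ∑ x ∈ W, ∑ y ∈ W, a x y := by
      rw [← Finset.sum_add_distrib]
      exact Finset.sum_congr rfl fun x _ => by rw [ha, hsplit]
    have e2 : ∑ x ∈ W, ∑ y ∈ U, a x y ≤ ∑ u ∈ U, H.degree u := by
      rw [Finset.sum_comm]
      refine Finset.sum_le_sum fun u _ => ?_
      rw [ha, hsplit]
      simp only [asymm _ u]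
      omega
    have e3 : ∑ x ∈ W, ∑ y ∈ W, a x y ≤ 2 * W2l.card := by
      have : ∀ x ∈ W, ∑ y ∈ W, a x y ≤ if x ∈ W2l then 2 else 0 := by
        intro x hx
        split_ifs with h
        · have hx2 := (Finset.mem_filter.1 h).2
          calc ∑ y ∈ W, a x y ≤ ∑ y, a x y := Finset.sum_le_sum_of_subset (Finset.subset_univ _)
            _ = H.degree x := (ha x).symm
            _ ≤ G.degree x := by
              rw [← SimpleGraph.card_neighborFinset_eq_degree, ← SimpleGraph.card_neighborFinset_eq_degree]
              refine Finset.card_le_card fun y hy => ?_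
              rw [SimpleGraph.mem_neighborFinset] at *
              exact hy.1
            _ ≤ 2 := by omega
        · rw [Nat.le_zero]
          refine Finset.sum_eq_zero fun y hy => ?_
          show (if H.Adj x y then 1 else 0) = 0
          rw [if_neg]
          intro hxy
          apply h
          exact Finset.mem_filter.2 ⟨Finset.mem_filter.2 ⟨hx, adjW2 x hx y hy hxy.1⟩, by have := hxy.2.1; omega⟩
      refine (Finset.sum_le_sum this).trans ?_
      rw [← Finset.sum_filter, Finset.sum_const, smul_eq_mul, mul_comm]
      refine Nat.mul_le_mul_left _ (Finset.card_le_card fun x hx => (Finset.mem_filter.1 hx).2)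
    omega
  -- bipartite part
  let d : V → ℕ := fun u => (B.filter fun b => G.Adj u b).card
  have hBhigh : ∀ b ∈ B, 3 ≤ G.degree b := fun b hb => (Finset.mem_filter.1 hb).2.1
  have c1 : 3 * B.card ≤ ∑ u ∈ U, d u := by
    calc 3 * B.card = ∑ b ∈ B, 3 := by simp [mul_comm]
      _ ≤ ∑ b ∈ B, (U.filter fun u => G.Adj u b).card := by
          refine Finset.sum_le_sum fun b hb => (hBhigh b hb).trans ?_
          rw [← SimpleGraph.card_neighborFinset_eq_degree]
          refine Finset.card_le_card fun y hy => ?_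
          rw [SimpleGraph.mem_neighborFinset] at hy
          refine Finset.mem_filter.2 ⟨?_, hy.symm⟩
          by_contra hyU
          have hb' := Finset.mem_filter.1 hb
          exact hb'.2.2 (adjW2 b hb'.1 y (Finset.mem_compl.2 hyU) hy)
      _ = _ := by
          simp only [d, Finset.card_filter]
          rw [Finset.sum_comm]
  have hUsplit : ∀ F : V → ℕ, ∑ x ∈ U, F x = ∑ x ∈ Uh, F x + ∑ x ∈ Ul, F x := fun F =>
    (Finset.sum_filter_add_sum_filter_not U _ F).symm
  have hdisj : Disjoint Uh B := by
    rw [Finset.disjoint_left]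
    intro x hx hx'
    exact Finset.mem_compl.1 (Finset.mem_filter.1 hx').1 (Finset.mem_filter.1 hx).1
  have c2 : ∑ u ∈ Uh, d u ≤ 2 * (Uh.card + B.card) := by
    refine le_trans (le_of_eq ?_) (planar_bip G hpl Uh B hdisj)
    rw [Finset.card_filter, Fintype.sum_prod_type, ← Finset.sum_coe_sort Uh]
    refine Finset.sum_congr rfl fun u _ => ?_
    simp only [d]
    rw [Finset.card_filter, ← Finset.sum_coe_sort B]
  have c3 : ∑ u ∈ Uh, H.degree u = 0 := by
    refine Finset.sum_eq_zero fun u hu => ?_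
    rw [← SimpleGraph.card_neighborFinset_eq_degree, Finset.card_eq_zero]
    ext w
    simp only [SimpleGraph.mem_neighborFinset, Finset.notMem_empty, iff_false]
    intro h
    have h1 := h.2.1
    have h2 := (Finset.mem_filter.1 hu).2
    omega
  have c4 : ∑ u ∈ Ul, H.degree u + ∑ u ∈ Ul, d u ≤ 2 * Ul.card := by
    rw [← Finset.sum_add_distrib, mul_comm, ← smul_eq_mul]
    refine Finset.sum_le_card_nsmul _ _ _ fun u hu => ?_
    have hu2 := (Finset.mem_filter.1 hu).2
    refine le_trans ?_ (by omega : G.degree u ≤ 2)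
    rw [← SimpleGraph.card_neighborFinset_eq_degree, ← SimpleGraph.card_neighborFinset_eq_degree]
    simp only [d]
    rw [← Finset.card_union_of_disjoint]
    · refine Finset.card_le_card fun y hy => ?_
      rw [SimpleGraph.mem_neighborFinset]
      rcases Finset.mem_union.1 hy with hy | hy
      · rw [SimpleGraph.mem_neighborFinset] at hy; exact hy.1
      · exact (Finset.mem_filter.1 hy).2
    · rw [Finset.disjoint_left]
      intro y hy hy'
      rw [SimpleGraph.mem_neighborFinset] at hy
      have h1 := hBhigh y (Finset.mem_filter.1 hy').1
      have h2 := hy.2.2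
      omega
  rw [hUsplit] at c1
  rw [hUsplit] at bs
  omega

end PlanarAux

/-- For a planar graph, if `s` is the number of edges both of whose endpoints
have degree at most 2 and `h` is the number of vertices of degree at least 3,
then `s + h ≤ 3ν(G)`. -/
theorem shallow_add_high_le_three_matching {V : Type*} [Fintype V]
    (G : SimpleGraph V) [DecidableRel G.Adj] (hplanar : G.IsPlanar) :
    ∃ M : G.Subgraph, M.IsMatching ∧
      ({e : Sym2 V | e ∈ G.edgeSet ∧ ∀ v ∈ e, G.degree v ≤ 2} : Set (Sym2 V)).ncard +
        ({v : V | 3 ≤ G.degree v} : Set V).ncard ≤ 3 * M.edgeSet.ncard := by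
  classical
  obtain ⟨U, f, g, hf, hg, hc, hW⟩ := PlanarAux.structure_thm G
  obtain ⟨M, hM, hcard⟩ := PlanarAux.to_subgraph G f hf.1
  refine ⟨M, hM, ?_⟩
  have := PlanarAux.main_count G hplanar U g hg hW
  omega
end

section
/- Every planar graph on n vertices with minimum degree at least 3 has a matching of size at least n/3. -/
namespace PMT
open Complex

/-- continuous logarithm -/
lemma exists_clog {X : Type*} [TopologicalSpace X] [SimplyConnectedSpace X]
    [LocallyPathConnectedSpace X] (f : X → ℂ) (hf : Continuous f) (h0 : ∀ x, f x ≠ 0) :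
    ∃ L : X → ℂ, Continuous L ∧ ∀ x, exp (L x) = f x := by
  obtain ⟨x0⟩ : Nonempty X := inferInstance
  obtain ⟨F, ⟨h1, h2⟩, -⟩ := isCoveringMapOn_exp.existsUnique_continuousMap_lifts ⟨f, hf⟩
    (e₀ := log (f x0)) (a₀ := x0) (by simpa using exp_log (h0 x0)) (by simpa using h0)
  exact ⟨F, F.continuous, fun x => congrFun h2 x⟩

open Classical in
noncomputable def lg (f : ℝ → ℂ) : ℝ → ℂ :=
  if h : ∃ L : ℝ → ℂ, Continuous L ∧ ∀ t, exp (L t) = f t then h.choose else 0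

noncomputable def chg (f : ℝ → ℂ) : ℂ := lg f 1 - lg f 0

lemma chg_eq (f : ℝ → ℂ) (L : ℝ → ℂ) (hL : Continuous L) (hf : ∀ t, exp (L t) = f t) :
    chg f = L 1 - L 0 := by
  have h : ∃ L : ℝ → ℂ, Continuous L ∧ ∀ t, exp (L t) = f t := ⟨L, hL, hf⟩
  have h1 := h.choose_spec
  have e : lg f = h.choose := by unfold lg; rw [dif_pos h]
  rw [← e] at h1
  have key : ∀ t, ∃ n : ℤ, lg f t - L t = n * (2 * Real.pi * I) := by
    intro t
    have : exp (lg f t) = exp (L t) := by rw [h1.2, hf]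
    obtain ⟨n, hn⟩ := exp_eq_exp_iff_exists_int.1 this
    exact ⟨n, by rw [hn]; ring⟩
  choose n hn using key
  have hpi : (2 * Real.pi : ℂ) ≠ 0 := by simp [Real.pi_ne_zero]
  have hc : Continuous (fun t => (n t : ℝ)) := by
    have : (fun t => (n t : ℝ)) = fun t => ((lg f t - L t) / (2 * Real.pi * I)).re := by
      ext t; rw [hn]
      rw [mul_div_cancel_right₀ _ (mul_ne_zero hpi I_ne_zero)]; simp
    rw [this]
    have := h1.1
    fun_prop
  have hn' : Continuous n := by
    exact (Int.isClosedEmbedding_coe_real.isInducing.continuous_iff).2 hc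
  have : n 1 = n 0 := PreconnectedSpace.constant inferInstance hn'
  have h10 := hn 1; have h00 := hn 0
  rw [this] at h10
  unfold chg
  linear_combination h10 - h00

lemma chg_neg (f : ℝ → ℂ) (hf : Continuous f) (h0 : ∀ x, f x ≠ 0) :
    chg (fun t => - f t) = chg f := by
  obtain ⟨L, hL, h⟩ := exists_clog f hf h0
  rw [chg_eq f L hL h, chg_eq _ (fun t => L t + Real.pi * I) (by fun_prop)]
  · ring
  · intro t; simp [exp_add, h]

lemma chg_log (f : ℝ → ℂ) (hf : Continuous f) (h0 : ∀ x, f x ≠ 0) :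
    ∃ n : ℤ, chg f = log (f 1) - log (f 0) + n * (2 * Real.pi * I) := by
  obtain ⟨L, hL, h⟩ := exists_clog f hf h0
  rw [chg_eq f L hL h]
  have : exp (L 1 - L 0) = exp (log (f 1) - log (f 0)) := by
    simp [exp_sub, exp_log (h0 _), h]
  exact exp_eq_exp_iff_exists_int.1 this

lemma log_odd (z : ℂ) (hz : z ≠ 0) :
    ∃ n : ℤ, log z - log (-z) = (2 * n + 1) * (Real.pi * I) := by
  have : exp (log z) = exp (log (-z) + Real.pi * I) := by
    simp [exp_add, exp_log, hz]
  obtain ⟨n, hn⟩ := exp_eq_exp_iff_exists_int.1 this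
  exact ⟨n, by rw [hn]; ring⟩

/-- square relation -/
lemma square (f g : ℝ → ℂ) (hf : Continuous f) (hg : Continuous g) (h : ∀ s t, f s ≠ g t) :
    chg (fun s => f s - g 0) - chg (fun s => f s - g 1)
      + chg (fun t => g t - f 1) - chg (fun t => g t - f 0) = 0 := by
  obtain ⟨L, hL, hh⟩ := exists_clog (X := ℝ × ℝ) (fun p => f p.1 - g p.2) (by fun_prop)
    (fun p => sub_ne_zero.2 (h _ _))
  have a1 := fun t => chg_eq (fun s => f s - g t) (fun s => L (s, t)) (by fun_prop)
    (fun s => hh (s, t))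
  have a2 : ∀ s, chg (fun t => g t - f s) = L (s, 1) - L (s, 0) := by
    intro s
    rw [← chg_eq (fun t => f s - g t) (fun t => L (s, t)) (by fun_prop) (fun t => hh (s, t))]
    rw [← chg_neg _ (by fun_prop) (fun t => sub_ne_zero.2 (h _ _))]
    simp
  rw [a1, a1, a2, a2]; ring

theorem no_K33_top (p q : Fin 3 → ℂ) (γ : Fin 3 → Fin 3 → ℝ → ℂ)
    (hc : ∀ i j, Continuous (γ i j)) (h0 : ∀ i j, γ i j 0 = p i) (h1 : ∀ i j, γ i j 1 = q j)
    (hd : ∀ i j k l, i ≠ k → j ≠ l → ∀ s t, γ i j s ≠ γ k l t) : False := by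
  -- distinctness
  have ot : ∀ i : Fin 3, ∃ k, i ≠ k := by decide
  have ot2 : ∀ i j : Fin 3, ∃ k, i ≠ k ∧ j ≠ k := by decide
  have hpp : ∀ i k, i ≠ k → p i ≠ p k := by
    intro i k hik
    rw [← h0 i 0, ← h0 k 1]; exact hd _ _ _ _ hik (by decide) _ _
  have hqq : ∀ i k, i ≠ k → q i ≠ q k := by
    intro i k hik
    rw [← h1 0 i, ← h1 1 k]; exact hd _ _ _ _ (by decide) hik _ _
  have hpq : ∀ i j, p i ≠ q j := by
    intro i j
    obtain ⟨k, hk⟩ := ot i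
    obtain ⟨l, hl⟩ := ot j
    rw [← h0 i l, ← h1 k j]; exact hd _ _ _ _ hk hl.symm _ _
  -- integers
  have N1 : ∀ i j k, ∃ n : ℤ, i ≠ k → chg (fun s => γ i j s - p k) =
      log (q j - p k) - log (p i - p k) + n * (2 * Real.pi * I) := by
    intro i j k
    by_cases hik : i = k
    · exact ⟨0, fun h => absurd hik h⟩
    obtain ⟨l, hl⟩ := ot j
    obtain ⟨n, hn⟩ := chg_log (fun s => γ i j s - p k) (by have := hc i j; fun_prop) (by
      intro s; rw [← h0 k l]; exact sub_ne_zero.2 (hd _ _ _ _ hik hl _ _))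
    refine ⟨n, fun _ => ?_⟩
    rw [hn, h0, h1]
  have N2 : ∀ i j l, ∃ n : ℤ, j ≠ l → chg (fun s => γ i j s - q l) =
      log (q j - q l) - log (p i - q l) + n * (2 * Real.pi * I) := by
    intro i j l
    by_cases hik : j = l
    · exact ⟨0, fun h => absurd hik h⟩
    obtain ⟨k, hl⟩ := ot i
    obtain ⟨n, hn⟩ := chg_log (fun s => γ i j s - q l) (by have := hc i j; fun_prop) (by
      intro s; rw [← h1 k l]; exact sub_ne_zero.2 (hd _ _ _ _ hl hik _ _))
    refine ⟨n, fun _ => ?_⟩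
    rw [hn, h0, h1]
  have O1 : ∀ i k, ∃ n : ℤ, i ≠ k → log (p i - p k) - log (p k - p i) =
      (2 * n + 1) * (Real.pi * I) := by
    intro i k
    by_cases hik : i = k
    · exact ⟨0, fun h => absurd hik h⟩
    obtain ⟨n, hn⟩ := log_odd (p i - p k) (sub_ne_zero.2 (hpp _ _ hik))
    exact ⟨n, fun _ => by rw [← hn, neg_sub]⟩
  have O2 : ∀ i k, ∃ n : ℤ, log (p i - q k) - log (q k - p i) =
      (2 * n + 1) * (Real.pi * I) := by
    intro i k
    obtain ⟨n, hn⟩ := log_odd (p i - q k) (sub_ne_zero.2 (hpq _ _))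
    exact ⟨n, by rw [← hn, neg_sub]⟩
  have O3 : ∀ i k, ∃ n : ℤ, i ≠ k → log (q i - q k) - log (q k - q i) =
      (2 * n + 1) * (Real.pi * I) := by
    intro i k
    by_cases hik : i = k
    · exact ⟨0, fun h => absurd hik h⟩
    obtain ⟨n, hn⟩ := log_odd (q i - q k) (sub_ne_zero.2 (hqq _ _ hik))
    exact ⟨n, fun _ => by rw [← hn, neg_sub]⟩
  choose n1 hn1 using N1
  choose n2 hn2 using N2
  choose a ha using O1
  choose b hb using O2
  choose c hcc using O3
  have R : ∀ i j k l, i ≠ k → j ≠ l →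
      -(2 * b k j + 1) - (2 * a i k + 1) - (2 * c j l + 1) + (2 * b i l + 1)
      + 2 * (n1 i j k - n2 i j l + n2 k l j - n1 k l i) = 0 := by
    intro i j k l hik hjl
    have h := square (γ i j) (γ k l) (hc _ _) (hc _ _) (hd _ _ _ _ hik hjl)
    rw [h0, h1, h0, h1, hn1 _ _ _ hik, hn2 _ _ _ hjl, hn2 _ _ _ hjl.symm,
      hn1 _ _ _ hik.symm] at h
    have e1 := hb k j
    have e2 := ha i k hik
    have e3 := hcc j l hjl
    have e4 := hb i l
    have hz : (Real.pi * I : ℂ) ≠ 0 := by simp [Real.pi_ne_zero]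
    have : ((-(2 * b k j + 1) - (2 * a i k + 1) - (2 * c j l + 1) + (2 * b i l + 1)
      + 2 * (n1 i j k - n2 i j l + n2 k l j - n1 k l i) : ℤ) : ℂ) * (Real.pi * I) = 0 := by
      push_cast
      linear_combination h + e1 + e2 + e3 - e4
    exact_mod_cast (mul_eq_zero.1 this).resolve_right hz
  have C : ∀ i k, i ≠ k → (2 * c i k + 1) + (2 * c k i + 1) = 0 := by
    intro i k hik
    have hz : (Real.pi * I : ℂ) ≠ 0 := by simp [Real.pi_ne_zero]
    have : (((2 * c i k + 1) + (2 * c k i + 1) : ℤ) : ℂ) * (Real.pi * I) = 0 := by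
      push_cast
      linear_combination - hcc i k hik - hcc k i hik.symm
    exact_mod_cast (mul_eq_zero.1 this).resolve_right hz
  have c01 := C 0 1 (by decide)
  have c02 := C 0 2 (by decide)
  have c12 := C 1 2 (by decide)
  have S : ∀ i k, i ≠ k → ∃ m : ℤ, - 2 * (b k 0 + b k 1 + b k 2) + 2 * (b i 0 + b i 1 + b i 2)
       - 3 * (2 * a i k + 1) + (n1 i 0 k + n1 i 1 k + n1 i 2 k + n1 k 0 i + n1 k 1 i + n1 k 2 i) * 2 + 
       (n2 i 0 1 + n2 i 0 2 + n2 i 1 0 + n2 i 1 2 + n2 i 2 0 + n2 i 2 1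
       + n2 k 0 1 + n2 k 0 2 + n2 k 1 0 + n2 k 1 2 + n2 k 2 0 + n2 k 2 1) = 2 * m := by
    intro i k hik
    have r1 := R i 0 k 1 hik (by decide)
    have r2 := R i 0 k 2 hik (by decide)
    have r3 := R i 1 k 0 hik (by decide)
    have r4 := R i 1 k 2 hik (by decide)
    have r5 := R i 2 k 0 hik (by decide)
    have r6 := R i 2 k 1 hik (by decide)
    refine ⟨n1 k 0 i + n1 k 1 i + n1 k 2 i + n1 k 0 i + n1 k 1 i + n1 k 2 i +
       n2 i 0 1 + n2 i 0 2 + n2 i 1 0 + n2 i 1 2 + n2 i 2 0 + n2 i 2 1, ?_⟩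
    linarith
  obtain ⟨m1, s1⟩ := S 0 1 (by decide)
  obtain ⟨m2, s2⟩ := S 0 2 (by decide)
  obtain ⟨m3, s3⟩ := S 1 2 (by decide)
  omega

end PMT

namespace PMT
open SimpleGraph

def IsK33 {V : Type*} (G : SimpleGraph V) (B Q : Fin 3 → Set V) : Prop :=
  (∀ i, (G.induce (B i)).Connected) ∧ (∀ i, (G.induce (Q i)).Connected) ∧
  (∀ i k, i ≠ k → Disjoint (B i) (B k)) ∧ (∀ i k, i ≠ k → Disjoint (Q i) (Q k)) ∧
  (∀ i k, Disjoint (B i) (Q k)) ∧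
  (∀ i j, ∃ x ∈ B i, ∃ y ∈ Q j, G.Adj x y)

lemma no_K33 {V : Type*} (G : SimpleGraph V) (hG : G.IsPlanar) (B Q : Fin 3 → Set V) :
    ¬ IsK33 G B Q := by
  rintro ⟨hB, hQ, hBB, hQQ, hBQ, hadj⟩
  obtain ⟨pos, γ, hinj, harc, -, hint, hcross⟩ := hG
  let X : Set V → Set (ℝ × ℝ) := fun U => {z | (∃ u ∈ U, z = pos u) ∨
    ∃ u v, ∃ h : G.Adj u v, u ∈ U ∧ v ∈ U ∧ ∃ t, z = γ h t}
  have hX0 : ∀ {u v} (h : G.Adj u v) (t : unitInterval) (w : V), γ h t = pos w → w = u ∨ w = v := by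
    intro u v h t w e
    by_cases h0 : t = 0
    · subst h0; rw [(harc h).2.2.1] at e; exact .inl (hinj e).symm
    by_cases h1 : t = 1
    · subst h1; rw [(harc h).2.2.2] at e; exact .inr (hinj e).symm
    exact absurd e (hint h t h0 h1 w)
  have hX : ∀ U U', Disjoint U U' → ∀ z ∈ X U, ∀ z' ∈ X U', z ≠ z' := by
    rintro U U' hd z hz z' hz' rfl
    have hne : ∀ x ∈ U, x ∈ U' → False := fun x hx hx' => Set.disjoint_left.1 hd hx hx'
    rcases hz with ⟨u, hu, e⟩ | ⟨u, v, h, hu, hv, t, e⟩ <;>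
    rcases hz' with ⟨u', hu', e'⟩ | ⟨u', v', h', hu', hv', t', e'⟩
    · have := hinj (e.symm.trans e'); subst this; exact hne _ hu hu'
    · rcases hX0 h' t' u (e'.symm.trans e) with rfl | rfl
      · exact hne _ hu hu'
      · exact hne _ hu hv'
    · rcases hX0 h t u' (e.symm.trans e') with rfl | rfl
      · exact hne _ hu hu'
      · exact hne _ hv hu'
    · have hs : s(u, v) ≠ s(u', v') := by
        intro hs
        rw [Sym2.eq_iff] at hs
        rcases hs with ⟨rfl, rfl⟩ | ⟨rfl, rfl⟩
        · exact hne _ hu hu'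
        · exact hne _ hu hv'
      rcases hcross h h' t t' hs (e.symm.trans e') with rfl | rfl
      · rw [(harc h).2.2.1] at e
        rcases hX0 h' t' u (e'.symm.trans e) with rfl | rfl
        · exact hne _ hu hu'
        · exact hne _ hu hv'
      · rw [(harc h).2.2.2] at e
        rcases hX0 h' t' v (e'.symm.trans e) with rfl | rfl
        · exact hne _ hv hu'
        · exact hne _ hv hv'
  have hJ : ∀ U : Set V, (G.induce U).Preconnected → ∀ u v, u ∈ U → v ∈ U →
      JoinedIn (X U) (pos u) (pos v) := by
    intro U hU u v hu hv
    obtain ⟨w⟩ := hU ⟨u, hu⟩ ⟨v, hv⟩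
    suffices H : ∀ a b : U, (G.induce U).Walk a b → JoinedIn (X U) (pos a) (pos b) from H _ _ w
    intro a b w
    induction w with
    | nil => exact JoinedIn.refl (.inl ⟨_, Subtype.property _, rfl⟩)
    | @cons a b c h w ih =>
      refine JoinedIn.trans ?_ ih
      have h' : G.Adj a b := h
      refine ⟨⟨⟨γ h', (harc h').1⟩, (harc h').2.2.1, (harc h').2.2.2⟩, fun t => ?_⟩
      exact .inr ⟨a, b, h', a.2, b.2, t, rfl⟩
  have hBn : ∀ i, ∃ p, p ∈ B i := fun i => by
    obtain ⟨x, hx⟩ := (hB i).nonempty; exact ⟨x, hx⟩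
  have hQn : ∀ i, ∃ p, p ∈ Q i := fun i => by
    obtain ⟨x, hx⟩ := (hQ i).nonempty; exact ⟨x, hx⟩
  choose p hp using hBn
  choose q hq using hQn
  have hj : ∀ i j, JoinedIn (X (B i ∪ Q j)) (pos (p i)) (pos (q j)) := by
    intro i j
    obtain ⟨x, hx, y, hy, h⟩ := hadj i j
    exact hJ _ (connected_induce_union (hB i).preconnected (hQ j).preconnected hx hy h).preconnected
      _ _ (.inl (hp i)) (.inr (hq j))
  choose P hP using hj
  let E := Complex.equivRealProdCLM.symm
  refine no_K33_top (fun i => E (pos (p i))) (fun j => E (pos (q j)))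
    (fun i j t => E ((P i j).extend t)) ?_ ?_ ?_ ?_
  · intro i j
    exact E.continuous.comp (P i j).continuous_extend
  · intro i j; simp
  · intro i j; simp
  · intro i j k l hik hjl s t h
    have h' := E.injective h
    have hr : ∀ i j (s : ℝ), (P i j).extend s ∈ X (B i ∪ Q j) := by
      intro i j s
      have : (P i j).extend s ∈ Set.range (P i j) := by
        rw [← Path.extend_range]; exact ⟨s, rfl⟩
      obtain ⟨t, ht⟩ := this
      rw [← ht]; exact hP i j t
    refine hX _ _ ?_ _ (hr i j s) _ (hr k l t) h'
    rw [Set.disjoint_union_left, Set.disjoint_union_right, Set.disjoint_union_right]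
    exact ⟨⟨hBB _ _ hik, hBQ _ _⟩, (hBQ _ _).symm, hQQ _ _ hjl⟩

end PMT

namespace PMT
open SimpleGraph

lemma conn_singleton {V : Type*} (G : SimpleGraph V) (v : V) : (G.induce {v}).Connected := by
  have : Subsingleton ({v} : Set V) := by infer_instance
  have : Nonempty ({v} : Set V) := ⟨⟨v, rfl⟩⟩
  exact ⟨SimpleGraph.Preconnected.of_subsingleton⟩

lemma mkK33 {V : Type*} {G : SimpleGraph V} (hK : ∀ B Q, ¬ IsK33 G B Q)
    {X p q R : Set V} {v w : V} (hX : (G.induce X).Connected) (hp : (G.induce p).Connected)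
    (hq : (G.induce q).Connected) (hR : (G.induce R).Connected)
    (hXp : Disjoint X p) (hXq : Disjoint X q) (hpq : Disjoint p q)
    (hXR : Disjoint X R) (hpR : Disjoint p R) (hqR : Disjoint q R)
    (hvw : v ≠ w) (hvR : v ∉ R) (hwR : w ∉ R)
    (hvX : v ∉ X) (hvp : v ∉ p) (hvq : v ∉ q) (hwX : w ∉ X) (hwp : w ∉ p) (hwq : w ∉ q)
    (avX : ∃ x ∈ X, G.Adj v x) (avp : ∃ x ∈ p, G.Adj v x) (avq : ∃ x ∈ q, G.Adj v x)
    (awX : ∃ x ∈ X, G.Adj w x) (awp : ∃ x ∈ p, G.Adj w x) (awq : ∃ x ∈ q, G.Adj w x)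
    (aRX : ∃ x ∈ X, ∃ y ∈ R, G.Adj x y) (aRp : ∃ x ∈ p, ∃ y ∈ R, G.Adj x y)
    (aRq : ∃ x ∈ q, ∃ y ∈ R, G.Adj x y) : False := by
  refine hK ![X, p, q] ![{v}, {w}, R] ⟨?_, ?_, ?_, ?_, ?_, ?_⟩
  · intro i; fin_cases i <;> assumption
  · intro i; fin_cases i
    · exact conn_singleton G v
    · exact conn_singleton G w
    · exact hR
  · intro i k hik
    fin_cases i <;> fin_cases k <;> first | exact absurd rfl hik | assumption | (apply Disjoint.symm; assumption)
  · intro i k hik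
    fin_cases i <;> fin_cases k <;> first | exact absurd rfl hik | simp [*, hvw.symm]
  · intro i k
    fin_cases i <;> fin_cases k <;> simp [*]
  · intro i j
    fin_cases i <;> fin_cases j <;> simp [G.adj_comm _ v, G.adj_comm _ w] <;> assumption

open Classical in
lemma count {V : Type*} (G : SimpleGraph V) (hK : ∀ B Q, ¬ IsK33 G B Q) (n : ℕ) :
    ∀ (C : Finset (Set V)) (A : Finset V) (N : V → Finset (Set V)), 1 ≤ n → C.card = n →
    (∀ X ∈ C, (G.induce X).Connected) → (∀ X ∈ C, ∀ Y ∈ C, X ≠ Y → Disjoint X Y) →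
    (∀ a ∈ A, ∀ X ∈ C, a ∉ X) →
    (∀ a ∈ A, N a ⊆ C ∧ (N a).card = 3 ∧ ∀ X ∈ N a, ∃ x ∈ X, G.Adj a x) →
    A.card + 2 ≤ 2 * n := by
  induction n with
  | zero => intro _ _ _ h; omega
  | succ n ih =>
  intro C A1 N _ hC hconn hdis hAC1 hN1
  by_contra hlt
  rcases A1.eq_empty_or_nonempty with rfl | ⟨a0, ha0⟩
  · simp at hlt
  have hn3 : 3 ≤ n + 1 := by
    rw [← hC, ← (hN1 a0 ha0).2.1]; exact Finset.card_le_card (hN1 a0 ha0).1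
  obtain ⟨A, hAA, hA⟩ : ∃ A ⊆ A1, A.card = 2 * n + 1 := Finset.exists_subset_card_eq (by omega)
  have hAC : ∀ a ∈ A, ∀ X ∈ C, a ∉ X := fun a ha => hAC1 a (hAA ha)
  have hN : ∀ a ∈ A, N a ⊆ C ∧ (N a).card = 3 ∧ ∀ X ∈ N a, ∃ x ∈ X, G.Adj a x :=
    fun a ha => hN1 a (hAA ha)
  -- merging
  have merge : ∀ a ∈ A, ∀ X ∈ N a, ∀ Y ∈ N a, X ≠ Y →
      3 ≤ (A.filter (fun b => X ∈ N b ∧ Y ∈ N b)).card := by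
    intro a ha X hX Y hY hXY
    by_contra hlt3
    have hXC := (hN a ha).1 hX
    have hYC := (hN a ha).1 hY
    obtain ⟨x, hxX, hax⟩ := (hN a ha).2.2 X hX
    obtain ⟨y, hyY, hay⟩ := (hN a ha).2.2 Y hY
    have hWc : (G.induce ((X ∪ {a}) ∪ Y)).Connected :=
      connected_induce_union (connected_induce_union (hconn X hXC).preconnected
        (conn_singleton G a).preconnected hxX rfl hax.symm).preconnected
        (hconn Y hYC).preconnected (.inr rfl) hyY hay
    set W : Set V := (X ∪ {a}) ∪ Y with hW
    have hXne : X.Nonempty := ⟨x, hxX⟩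
    let D := (C.erase X).erase Y
    have hDC : ∀ Z ∈ D, Z ∈ C ∧ Z ≠ X ∧ Z ≠ Y := by
      intro Z hZ; simp only [D, Finset.mem_erase] at hZ; tauto
    have hDW : ∀ Z ∈ D, Disjoint Z W := by
      intro Z hZ
      obtain ⟨h1, h2, h3⟩ := hDC Z hZ
      rw [hW, Set.disjoint_union_right, Set.disjoint_union_right]
      exact ⟨⟨hdis _ h1 _ hXC h2, Set.disjoint_singleton_right.2 (hAC a ha Z h1)⟩, hdis _ h1 _ hYC h3⟩
    have hWD : W ∉ D := by
      intro h
      have := hDW W h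
      rw [disjoint_self] at this
      have hx : x ∈ W := .inl (.inl hxX)
      rw [this] at hx; exact hx
    let m : Set V → Set V := fun Z => if Z = X ∨ Z = Y then W else Z
    have hmsub : ∀ Z, Z ⊆ m Z := by
      intro Z
      simp only [m]; split_ifs with h
      · rcases h with rfl | rfl
        · intro z hz; exact .inl (.inl hz)
        · intro z hz; exact .inr hz
      · exact le_rfl
    have hDcard : D.card = n - 1 := by
      simp only [D]
      rw [Finset.card_erase_of_mem (Finset.mem_erase.2 ⟨hXY.symm, hYC⟩),
        Finset.card_erase_of_mem hXC, hC]; omega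
    have hmem : ∀ Z ∈ C, m Z ∈ insert W D := by
      intro Z hZ
      simp only [m]; split_ifs with h
      · simp
      · push Not at h
        simp [D, h.1, h.2, hZ]
    have := ih (insert W D) (A.filter (fun b => ¬ (X ∈ N b ∧ Y ∈ N b))) (fun b => (N b).image m)
      (by omega) (by rw [Finset.card_insert_of_notMem hWD, hDcard]; omega) ?_ ?_ ?_ ?_
    · have h2 := Finset.card_filter_add_card_filter_not (s := A) (fun b => X ∈ N b ∧ Y ∈ N b)
      omega
    · intro Z hZ
      rcases Finset.mem_insert.1 hZ with rfl | hZ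
      · exact hWc
      · exact hconn _ (hDC Z hZ).1
    · intro Z hZ Z' hZ' hne
      rcases Finset.mem_insert.1 hZ with h | hZ <;> rcases Finset.mem_insert.1 hZ' with h' | hZ'
      · exact absurd (h.trans h'.symm) hne
      · rw [h]; exact (hDW _ hZ').symm
      · rw [h']; exact hDW _ hZ
      · exact hdis _ (hDC _ hZ).1 _ (hDC _ hZ').1 hne
    · intro b hb Z hZ
      rw [Finset.mem_filter] at hb
      rcases Finset.mem_insert.1 hZ with rfl | hZ
      · rintro ((h | h) | h)
        · exact hAC _ hb.1 _ hXC h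
        · rw [Set.mem_singleton_iff] at h
          subst h; exact hb.2 ⟨hX, hY⟩
        · exact hAC _ hb.1 _ hYC h
      · exact hAC _ hb.1 _ (hDC _ hZ).1
    · intro b hb
      rw [Finset.mem_filter] at hb
      obtain ⟨h1, h2, h3⟩ := hN b hb.1
      refine ⟨?_, ?_, ?_⟩
      · intro Z hZ
        obtain ⟨Z', hZ', rfl⟩ := Finset.mem_image.1 hZ
        exact hmem _ (h1 hZ')
      · rw [Finset.card_image_of_injOn, h2]
        intro Z hZ Z' hZ' he
        have hZ : Z ∈ N b := hZ
        have hZ' : Z' ∈ N b := hZ'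
        have key : ∀ Z ∈ N b, ¬ (Z = X ∨ Z = Y) → Z ≠ W := by
          intro Z hZ h e
          push Not at h
          exact hWD (e ▸ (by simp [D, h.1, h.2, h1 hZ]))
        simp only [m] at he
        split_ifs at he with c1 c2 c2
        · rcases c1 with rfl | rfl <;> rcases c2 with rfl | rfl
          · rfl
          · exact absurd ⟨hZ, hZ'⟩ hb.2
          · exact absurd ⟨hZ', hZ⟩ hb.2
          · rfl
        · exact absurd he.symm (key _ hZ' c2)
        · exact absurd he (key _ hZ c1)
        · exact he
      · intro Z hZ
        obtain ⟨Z', hZ', rfl⟩ := Finset.mem_image.1 hZ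
        obtain ⟨z, hz, hb'⟩ := h3 Z' hZ'
        exact ⟨z, hmsub _ hz, hb'⟩
  -- vertex of small degree
  obtain ⟨X, hXC, hX5⟩ : ∃ X ∈ C, (A.filter (fun a => X ∈ N a)).card ≤ 5 := by
    by_contra hcon
    push Not at hcon
    have h1 : ∑ X ∈ C, (A.filter (fun a => X ∈ N a)).card = ∑ a ∈ A, (C.filter (fun X => X ∈ N a)).card :=
      Finset.sum_card_bipartiteAbove_eq_sum_card_bipartiteBelow _
    have h2 : ∑ a ∈ A, (C.filter (fun X => X ∈ N a)).card = ∑ a ∈ A, 3 := by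
      refine Finset.sum_congr rfl fun a ha => ?_
      rw [← (hN a ha).2.1]; congr 1
      ext Z; simp only [Finset.mem_filter, and_iff_right_iff_imp]; exact fun h => (hN a ha).1 h
    have h3 : ∑ X ∈ C, 6 ≤ ∑ X ∈ C, (A.filter (fun a => X ∈ N a)).card :=
      Finset.sum_le_sum fun X hX => hcon X hX
    rw [h1, h2] at h3
    simp at h3
    omega
  set D := A.filter (fun a => X ∈ N a) with hD
  rcases D.eq_empty_or_nonempty with hDe | ⟨d0, hd0⟩
  · have := ih (C.erase X) A N (by omega) (by rw [Finset.card_erase_of_mem hXC, hC]; omega)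
      (fun Z hZ => hconn _ (Finset.mem_of_mem_erase hZ))
      (fun Z hZ Z' hZ' => hdis _ (Finset.mem_of_mem_erase hZ) _ (Finset.mem_of_mem_erase hZ'))
      (fun a ha Z hZ => hAC a ha _ (Finset.mem_of_mem_erase hZ)) ?_
    · omega
    · intro a ha
      refine ⟨?_, (hN a ha).2⟩
      intro Z hZ
      refine Finset.mem_erase.2 ⟨?_, (hN a ha).1 hZ⟩
      rintro rfl
      have : a ∈ D := Finset.mem_filter.2 ⟨ha, hZ⟩
      rw [hDe] at this; simp at this
  have hDA : ∀ a ∈ D, a ∈ A ∧ X ∈ N a := fun a ha => Finset.mem_filter.1 ha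
  let M : V → Finset (Set V) := fun a => (N a).erase X
  have hM2 : ∀ a ∈ D, (M a).card = 2 := by
    intro a ha
    simp only [M]
    rw [Finset.card_erase_of_mem (hDA a ha).2, (hN a (hDA a ha).1).2.1]
  have hMN : ∀ a, ∀ Z ∈ M a, Z ∈ N a ∧ Z ≠ X := by
    intro a Z hZ; exact ⟨Finset.mem_of_mem_erase hZ, Finset.ne_of_mem_erase hZ⟩
  have hM3 : ∀ a ∈ D, ∀ Y ∈ M a, 3 ≤ (D.filter (fun b => Y ∈ M b)).card := by
    intro a ha Y hY
    refine (merge a (hDA a ha).1 X (hDA a ha).2 Y (hMN a Y hY).1 (hMN a Y hY).2.symm).trans ?_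
    refine Finset.card_le_card ?_
    intro b hb
    simp only [hD, M, Finset.mem_filter, Finset.mem_erase] at hb ⊢
    exact ⟨⟨hb.1, hb.2.1⟩, (hMN a Y hY).2, hb.2.2⟩
  let P := D.biUnion M
  have hMP : ∀ a ∈ D, M a ⊆ P := fun a ha => Finset.subset_biUnion_of_mem M ha
  have hPD : 3 * P.card ≤ 2 * D.card := by
    have h1 : ∑ Y ∈ P, (D.filter (fun a => Y ∈ M a)).card = ∑ a ∈ D, (P.filter (fun Y => Y ∈ M a)).card :=
      Finset.sum_card_bipartiteAbove_eq_sum_card_bipartiteBelow _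
    have h2 : ∑ a ∈ D, (P.filter (fun Y => Y ∈ M a)).card = ∑ a ∈ D, 2 := by
      refine Finset.sum_congr rfl fun a ha => ?_
      rw [← hM2 a ha]; congr 1
      ext Z; simp only [Finset.mem_filter, and_iff_right_iff_imp]; exact fun h => hMP a ha h
    have h3 : ∑ Y ∈ P, 3 ≤ ∑ Y ∈ P, (D.filter (fun a => Y ∈ M a)).card := by
      refine Finset.sum_le_sum fun Y hY => ?_
      obtain ⟨a, ha, hY⟩ := Finset.mem_biUnion.1 hY
      exact hM3 a ha Y hY
    rw [h1, h2] at h3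
    simp at h3
    omega
  have hP3 : P.card ≤ 3 := by omega
  have hP2 : 2 ≤ P.card := by rw [← hM2 d0 hd0]; exact Finset.card_le_card (hMP d0 hd0)
  obtain ⟨v, hv, w, hw, hvw, hMvw⟩ : ∃ v ∈ D, ∃ w ∈ D, v ≠ w ∧ M v = M w := by
    refine Finset.exists_ne_map_eq_of_card_lt_of_maps_to (t := P.powersetCard 2) ?_ ?_
    · rw [Finset.card_powersetCard]
      have : P.card = 2 ∨ P.card = 3 := by omega
      rcases this with h | h <;> rw [h] at hPD ⊢ <;> simp [Nat.choose] <;> omega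
    · intro a ha
      exact Finset.mem_powersetCard.2 ⟨hMP a ha, hM2 a ha⟩
  obtain ⟨p, q, hpq, hMv⟩ := Finset.card_eq_two.1 (hM2 v hv)
  have hpv : p ∈ M v := by simp [hMv]
  have hqv : q ∈ M v := by simp [hMv]
  have hC' : ∀ a ∈ D, ∀ Z ∈ M a, Z ∈ C := fun a ha Z hZ => (hN a (hDA a ha).1).1 (hMN a Z hZ).1
  have hAdj : ∀ a ∈ D, ∀ Z ∈ M a, ∃ x ∈ Z, G.Adj a x :=
    fun a ha Z hZ => (hN a (hDA a ha).1).2.2 Z (hMN a Z hZ).1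
  have hAdjX : ∀ a ∈ D, ∃ x ∈ X, G.Adj a x :=
    fun a ha => (hN a (hDA a ha).1).2.2 X (hDA a ha).2
  have hpC := hC' v hv p hpv
  have hqC := hC' v hv q hqv
  have hpX := (hMN v p hpv).2
  have hqX := (hMN v q hqv).2
  have hout : ∀ a ∈ D, ∀ Z ∈ C, a ∉ Z := fun a ha => hAC a (hDA a ha).1
  have fin : ∀ R : Set V, (G.induce R).Connected → Disjoint X R → Disjoint p R → Disjoint q R →
      v ∉ R → w ∉ R → (∃ x ∈ X, ∃ y ∈ R, G.Adj x y) → (∃ x ∈ p, ∃ y ∈ R, G.Adj x y) →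
      (∃ x ∈ q, ∃ y ∈ R, G.Adj x y) → False := by
    intro R hR hXR hpR hqR hvR hwR h1 h2 h3
    exact mkK33 hK (hconn X hXC) (hconn p hpC) (hconn q hqC) hR
      (hdis _ hXC _ hpC hpX.symm) (hdis _ hXC _ hqC hqX.symm) (hdis _ hpC _ hqC hpq)
      hXR hpR hqR hvw hvR hwR (hout v hv X hXC) (hout v hv p hpC) (hout v hv q hqC)
      (hout w hw X hXC) (hout w hw p hpC) (hout w hw q hqC)
      (hAdjX v hv) (hAdj v hv p hpv) (hAdj v hv q hqv)
      (hAdjX w hw) (hAdj w hw p (hMvw ▸ hpv)) (hAdj w hw q (hMvw ▸ hqv)) h1 h2 h3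
  have symm_adj : ∀ (a : V) (Z R : Set V), a ∈ R → (∃ x ∈ Z, G.Adj a x) → ∃ x ∈ Z, ∃ y ∈ R, G.Adj x y := by
    rintro a Z R ha ⟨x, hx, h⟩; exact ⟨x, hx, a, ha, h.symm⟩
  have same : ∀ u ∈ D, M u = M v → u = v ∨ u = w := by
    intro u hu hMu
    by_contra hne
    push Not at hne
    have hup : p ∈ M u := hMu ▸ hpv
    have huq : q ∈ M u := hMu ▸ hqv
    refine fin {u} (conn_singleton G u) ?_ ?_ ?_ ?_ ?_ (symm_adj u _ _ rfl (hAdjX u hu))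
      (symm_adj u _ _ rfl (hAdj u hu p hup)) (symm_adj u _ _ rfl (hAdj u hu q huq))
    · exact Set.disjoint_singleton_right.2 (hout u hu _ hXC)
    · exact Set.disjoint_singleton_right.2 (hout u hu _ hpC)
    · exact Set.disjoint_singleton_right.2 (hout u hu _ hqC)
    · exact fun h => hne.1 h.symm
    · exact fun h => hne.2 h.symm
  have other : ∀ y ∈ M v, ∃ u ∈ D, y ∈ M u ∧ M u ≠ M v := by
    intro y hy
    by_contra hcon
    push Not at hcon
    have h3 := hM3 v hv y hy
    have : D.filter (fun b => y ∈ M b) ⊆ {v, w} := by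
      intro b hb
      rw [Finset.mem_filter] at hb
      have := same b hb.1 (hcon b hb.1 hb.2)
      simpa using this
    have := (Finset.card_le_card this).trans Finset.card_le_two
    omega
  have third : ∀ u ∈ D, M u ≠ M v → ∃ r ∈ M u, r ≠ p ∧ r ≠ q := by
    intro u hu hne
    by_contra hcon
    push Not at hcon
    apply hne
    apply Finset.eq_of_subset_of_card_le
    · intro r hr
      rw [hMv]
      by_cases h : r = p
      · simp [h]
      · simp [hcon r hr h]
    · rw [hM2 u hu, hM2 v hv]
  obtain ⟨u, hu, hpu, hnu⟩ := other p hpv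
  obtain ⟨u', hu', hqu', hnu'⟩ := other q hqv
  obtain ⟨r, hr, hrp, hrq⟩ := third u hu hnu
  obtain ⟨r', hr', hrp', hrq'⟩ := third u' hu' hnu'
  have hrr : r = r' := by
    by_contra hne
    have hsub : ({p, q, r, r'} : Finset (Set V)) ⊆ P := by
      intro z hz
      simp only [Finset.mem_insert, Finset.mem_singleton] at hz
      rcases hz with rfl | rfl | rfl | rfl
      · exact hMP v hv hpv
      · exact hMP v hv hqv
      · exact hMP u hu hr
      · exact hMP u' hu' hr'
    have h4 : ({p, q, r, r'} : Finset (Set V)).card = 4 := by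
      rw [Finset.card_insert_of_notMem, Finset.card_insert_of_notMem, Finset.card_insert_of_notMem]
      all_goals simp [hpq, hrp.symm, hrp'.symm, hrq.symm, hrq'.symm, hne]
    have := Finset.card_le_card hsub
    omega
  subst hrr
  have hrC := hC' u hu r hr
  have hrX := (hMN u r hr).2
  obtain ⟨y, hy, hay⟩ := hAdj u hu r hr
  obtain ⟨y', hy', hay'⟩ := hAdj u' hu' r hr'
  refine fin (({u} ∪ r) ∪ {u'}) ?_ ?_ ?_ ?_ ?_ ?_ ?_ ?_ ?_
  · exact connected_induce_union (connected_induce_union (conn_singleton G u).preconnected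
      (hconn r hrC).preconnected rfl hy hay).preconnected (conn_singleton G u').preconnected
      (.inr hy') rfl hay'.symm
  · simp only [Set.disjoint_union_right, Set.disjoint_singleton_right]
    exact ⟨⟨hout u hu _ hXC, hdis _ hXC _ hrC hrX.symm⟩, hout u' hu' _ hXC⟩
  · simp only [Set.disjoint_union_right, Set.disjoint_singleton_right]
    exact ⟨⟨hout u hu _ hpC, hdis _ hpC _ hrC hrp.symm⟩, hout u' hu' _ hpC⟩
  · simp only [Set.disjoint_union_right, Set.disjoint_singleton_right]
    exact ⟨⟨hout u hu _ hqC, hdis _ hqC _ hrC hrq.symm⟩, hout u' hu' _ hqC⟩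
  · rintro ((h | h) | h)
    · exact hnu (by rw [Set.mem_singleton_iff.1 h])
    · exact hout v hv r hrC h
    · exact hnu' (by rw [Set.mem_singleton_iff.1 h])
  · rintro ((h | h) | h)
    · exact hnu (by rw [hMvw, Set.mem_singleton_iff.1 h])
    · exact hout w hw r hrC h
    · exact hnu' (by rw [hMvw, Set.mem_singleton_iff.1 h])
  · exact symm_adj u _ _ (.inl (.inl rfl)) (hAdjX u hu)
  · exact symm_adj u _ _ (.inl (.inl rfl)) (hAdj u hu p hpu)
  · exact symm_adj u' _ _ (.inr rfl) (hAdj u' hu' q hqu')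

end PMT

namespace PMT
open SimpleGraph

open Classical in
lemma indep_bound {V : Type*} (G : SimpleGraph V) (hK : ∀ B Q, ¬ IsK33 G B Q) (S A : Finset V)
    (hd : Disjoint A S) (h3 : ∀ a ∈ A, ∃ t ⊆ S, t.card = 3 ∧ ∀ x ∈ t, G.Adj a x) :
    A.card ≤ 2 * S.card := by
  rcases A.eq_empty_or_nonempty with rfl | ⟨a, ha⟩
  · simp
  have hS : 1 ≤ S.card := by
    obtain ⟨t, ht, h, -⟩ := h3 a ha
    have := Finset.card_le_card ht
    omega
  have : ∀ a, ∃ t : Finset V, a ∈ A → t ⊆ S ∧ t.card = 3 ∧ ∀ x ∈ t, G.Adj a x := by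
    intro a
    by_cases ha : a ∈ A
    · obtain ⟨t, ht⟩ := h3 a ha; exact ⟨t, fun _ => ht⟩
    · exact ⟨∅, fun h => absurd h ha⟩
  choose t ht using this
  have hinj : Function.Injective (fun x : V => ({x} : Set V)) := Set.singleton_injective
  have := count G hK S.card (S.image fun x => {x}) A (fun a => (t a).image fun x => {x}) hS
    (Finset.card_image_of_injective _ hinj) ?_ ?_ ?_ ?_
  · omega
  · intro X hX
    obtain ⟨x, hx, rfl⟩ := Finset.mem_image.1 hX
    exact conn_singleton G x
  · intro X hX Y hY hne
    obtain ⟨x, hx, rfl⟩ := Finset.mem_image.1 hX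
    obtain ⟨y, hy, rfl⟩ := Finset.mem_image.1 hY
    exact Set.disjoint_singleton.2 fun h => hne (by rw [h])
  · intro a ha X hX hm
    obtain ⟨x, hx, rfl⟩ := Finset.mem_image.1 hX
    rw [Set.mem_singleton_iff] at hm
    subst hm
    exact Finset.disjoint_left.1 hd ha hx
  · intro a ha
    obtain ⟨h1, h2, h3⟩ := ht a ha
    refine ⟨Finset.image_subset_image h1, ?_, ?_⟩
    · rw [Finset.card_image_of_injective _ hinj, h2]
    · intro X hX
      obtain ⟨x, hx, rfl⟩ := Finset.mem_image.1 hX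
      exact ⟨x, rfl, h3 x hx⟩

open Classical in
lemma odd_bound {W : Type*} [Finite W] (T : SimpleGraph W) :
    3 * T.oddComponents.ncard ≤ Nat.card W + 2 * {w | ∀ y, ¬ T.Adj w y}.ncard := by
  cases nonempty_fintype W
  have e1 : Nat.card W = ∑ c : T.ConnectedComponent,
      (Finset.univ.filter (fun w : W => T.connectedComponentMk w = c)).card := by
    rw [Nat.card_eq_fintype_card, ← Finset.card_univ]
    exact Finset.card_eq_sum_card_fiberwise (fun _ _ => Finset.mem_univ _)
  have e2 : {w | ∀ y, ¬ T.Adj w y}.ncard = ∑ c : T.ConnectedComponent,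
      ((Finset.univ.filter (fun w => ∀ y, ¬ T.Adj w y)).filter
        (fun w : W => T.connectedComponentMk w = c)).card := by
    have h := Finset.card_eq_sum_card_fiberwise (s := Finset.univ.filter (fun w => ∀ y, ¬ T.Adj w y))
      (f := T.connectedComponentMk) (t := Finset.univ) (fun _ _ => Finset.mem_univ _)
    rw [← h, ← Set.ncard_coe_finset]
    simp
  have e3 : T.oddComponents.ncard = (Finset.univ.filter (fun c : T.ConnectedComponent =>
      c ∈ T.oddComponents)).card := by
    rw [← Set.ncard_coe_finset]; simp
  rw [e1, e2, e3, Finset.mul_sum, ← Finset.sum_add_distrib, mul_comm, ← smul_eq_mul,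
    ← Finset.sum_const]
  refine (Finset.sum_le_sum ?_).trans (Finset.sum_le_sum_of_subset (Finset.subset_univ _))
  intro c hc
  rw [Finset.mem_filter] at hc
  have hodd : Odd c.supp.ncard := hc.2
  have hs : c.supp.ncard = (Finset.univ.filter (fun w : W => T.connectedComponentMk w = c)).card := by
    rw [← Set.ncard_coe_finset]; congr 1; ext w; simp
  rw [hs] at hodd
  by_cases h1 : (Finset.univ.filter (fun w : W => T.connectedComponentMk w = c)).card = 1
  · obtain ⟨w, hw⟩ := Finset.card_eq_one.1 h1
    have hwm : T.connectedComponentMk w = c := by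
      have : w ∈ Finset.univ.filter (fun w : W => T.connectedComponentMk w = c) := by rw [hw]; simp
      simpa using this
    have : 1 ≤ ((Finset.univ.filter (fun w => ∀ y, ¬ T.Adj w y)).filter
        (fun w : W => T.connectedComponentMk w = c)).card := by
      apply Finset.card_pos.2
      refine ⟨w, ?_⟩
      simp only [Finset.mem_filter, Finset.mem_univ, true_and]
      refine ⟨fun y hy => ?_, hwm⟩
      have : y ∈ Finset.univ.filter (fun w : W => T.connectedComponentMk w = c) := by
        simp only [Finset.mem_filter, Finset.mem_univ, true_and]
        rw [← hwm]
        exact ConnectedComponent.sound hy.symm.reachable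
      rw [hw, Finset.mem_singleton] at this
      subst this
      exact hy.ne rfl
    omega
  · obtain ⟨k, hk⟩ := hodd
    omega

/-- add `d` universal vertices -/
def aug {V : Type*} (G : SimpleGraph V) (d : ℕ) : SimpleGraph (V ⊕ Fin d) where
  Adj x y := x ≠ y ∧ ∀ a b, x = .inl a → y = .inl b → G.Adj a b
  symm := ⟨fun x y h => ⟨h.1.symm, fun a b ha hb => (h.2 b a hb ha).symm⟩⟩
  loopless := ⟨fun x h => h.1 rfl⟩

open Classical in
lemma matching_of_aug {V : Type*} [Fintype V] (G : SimpleGraph V) (d : ℕ)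
    (M : (aug G d).Subgraph) (hM : M.IsPerfectMatching) :
    ∃ M : G.Subgraph, M.IsMatching ∧ Fintype.card V ≤ 2 * M.edgeSet.ncard + d := by
  rw [Subgraph.isPerfectMatching_iff] at hM
  choose f hf hfu using hM
  let M' : G.Subgraph :=
    { verts := {a | ∃ b, M.Adj (.inl a) (.inl b)}
      Adj := fun a b => M.Adj (.inl a) (.inl b)
      adj_sub := fun {a b} h => (M.adj_sub h).2 a b rfl rfl
      edge_vert := fun {a b} h => ⟨b, h⟩
      symm := ⟨fun a b h => h.symm⟩ }
  refine ⟨M', ?_, ?_⟩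
  · rintro a ⟨b, hb⟩
    refine ⟨b, hb, fun c hc => ?_⟩
    have := (hfu _ _ hb).trans (hfu _ _ hc).symm
    exact (Sum.inl_injective this).symm
  · have hE : M'.edgeSet.ncard = M'.edgeSet.toFinset.card := by
      rw [Set.ncard_eq_toFinset_card']
    rw [hE]
    let A := Finset.univ.filter (fun a : V => ∃ b, M.Adj (.inl a) (.inl b))
    let B := Finset.univ.filter (fun a : V => ¬ ∃ b, M.Adj (.inl a) (.inl b))
    have hAB : A.card + B.card = Fintype.card V := by
      rw [← Finset.card_univ]; exact Finset.card_filter_add_card_filter_not _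
    have hA : A.card ≤ M'.edgeSet.toFinset.card * 2 := by
      have : A ⊆ M'.edgeSet.toFinset.biUnion (fun e => e.toFinset) := by
        intro a ha
        obtain ⟨b, hb⟩ := (Finset.mem_filter.1 ha).2
        refine Finset.mem_biUnion.2 ⟨s(a, b), ?_, by simp⟩
        rw [Set.mem_toFinset]; exact hb
      refine (Finset.card_le_card this).trans (Finset.card_biUnion_le_card_mul _ _ _ ?_)
      intro e _
      rw [Sym2.card_toFinset]; split_ifs <;> simp
    have hB : B.card ≤ d := by
      have : B.card ≤ (Finset.univ.image (fun i : Fin d => (Sum.inr i : V ⊕ Fin d))).card := by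
        refine Finset.card_le_card_of_injOn (fun a => f (.inl a)) ?_ ?_
        · intro a ha
          have ha := (Finset.mem_filter.1 ha).2
          have h := hf (.inl a)
          show f (.inl a) ∈ _
          rcases hfa : f (.inl a) with b | i
          · rw [hfa] at h; exact absurd ⟨b, h⟩ ha
          · simp
        · intro a _ b _ hab
          have h1 := (hf (.inl a)).symm
          have h2 := (hf (.inl b)).symm
          simp only at hab
          rw [← hab] at h2
          exact Sum.inl_injective ((hfu _ _ h1).trans (hfu _ _ h2).symm)
      refine this.trans (Finset.card_image_le.trans ?_)
      simp
    omega

end PMT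

/-- Every planar graph on `n` vertices with minimum degree at least 3 has a
matching of size at least `n/3`. -/
theorem planar_min_degree_three_matching {V : Type*} [Fintype V]
    (G : SimpleGraph V) [DecidableRel G.Adj] (hplanar : G.IsPlanar)
    (hdeg : ∀ v : V, 3 ≤ G.degree v) :
    ∃ M : G.Subgraph, M.IsMatching ∧ Fintype.card V ≤ 3 * M.edgeSet.ncard := by
  classical
  have hK := PMT.no_K33 G hplanar
  obtain ⟨d, r, hr, hn⟩ : ∃ d r : ℕ, r ≤ 2 ∧ Fintype.card V = 3 * d + 2 * r := by
    by_cases h : (Fintype.card V - 3 * (Fintype.card V / 3)) % 2 = 0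
    · exact ⟨Fintype.card V / 3, (Fintype.card V - 3 * (Fintype.card V / 3)) / 2, by omega, by omega⟩
    · by_cases h2 : Fintype.card V / 3 = 0
      · exfalso
        have h1 : Fintype.card V = 1 := by omega
        obtain ⟨v, _⟩ := Fintype.card_eq_one_iff.1 h1
        have := G.degree_lt_card_verts v
        have := hdeg v
        omega
      · exact ⟨Fintype.card V / 3 - 1, 2, by omega, by omega⟩
  suffices h : ∃ M : (PMT.aug G d).Subgraph, M.IsPerfectMatching by
    obtain ⟨M, hM⟩ := h
    obtain ⟨M', h1, h2⟩ := PMT.matching_of_aug G d M hM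
    exact ⟨M', h1, by omega⟩
  rw [SimpleGraph.tutte]
  intro U hU
  unfold SimpleGraph.IsTutteViolator at hU
  set T := ((⊤ : (PMT.aug G d).Subgraph).deleteVerts U).coe with hT
  have hodd := SimpleGraph.odd_ncard_oddComponents T
  have hverts : Nat.card ((⊤ : (PMT.aug G d).Subgraph).deleteVerts U).verts + U.ncard
      = Fintype.card V + d := by
    rw [Nat.card_coe_set_eq]
    have := Set.ncard_add_ncard_compl U
    rw [Nat.card_eq_fintype_card, Fintype.card_sum, Fintype.card_fin] at this
    rw [← this, add_comm]; congr 2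
    ext x; simp
  have hTadj : ∀ x y, T.Adj x y ↔ (PMT.aug G d).Adj x.1 y.1 := by
    intro x y
    have hx := x.2; have hy := y.2
    simp only [SimpleGraph.Subgraph.deleteVerts_verts, Set.mem_sdiff] at hx hy
    simp [hT, hx.2, hy.2]
  by_cases hall : ∀ i, Sum.inr i ∈ U
  · let S : Finset V := Finset.univ.filter (fun a => Sum.inl a ∈ U)
    have hSU : U.ncard = S.card + d := by
      have : U = ((S.disjSum (Finset.univ : Finset (Fin d)) : Finset (V ⊕ Fin d)) : Set (V ⊕ Fin d)) := by
        ext x; rcases x with a | i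
        · simp [S]
        · simp [hall]
      rw [this, Set.ncard_coe_finset, Finset.card_disjSum]; simp
    let A : Finset V := Finset.univ.filter (fun a => a ∉ S ∧ ∀ b, G.Adj a b → b ∈ S)
    have hA : A.card ≤ 2 * S.card := by
      refine PMT.indep_bound G hK S A ?_ ?_
      · rw [Finset.disjoint_left]; intro a ha; exact (Finset.mem_filter.1 ha).2.1
      · intro a ha
        have ha' := (Finset.mem_filter.1 ha).2.2
        have h3 := hdeg a
        rw [← SimpleGraph.card_neighborFinset_eq_degree] at h3
        obtain ⟨t, ht, h⟩ := Finset.exists_subset_card_eq h3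
        refine ⟨t, fun x hx => ha' x ?_, h, fun x hx => ?_⟩
        · simpa using ht hx
        · simpa using ht hx
    have hiso : {w | ∀ y, ¬ T.Adj w y}.ncard ≤ A.card := by
      rw [← Set.ncard_image_of_injective _ Subtype.val_injective, ← Finset.card_map Function.Embedding.inl,
        ← Set.ncard_coe_finset]
      refine Set.ncard_le_ncard ?_ (Set.toFinite _)
      rintro _ ⟨⟨w, hw⟩, hw2, rfl⟩
      have hwU : w ∉ U := by simpa using hw
      rcases w with a | i
      · simp only [Finset.coe_map, Set.mem_image]
        refine ⟨a, ?_, rfl⟩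
        simp only [A, S, Finset.coe_filter, Finset.mem_filter, Finset.mem_univ, true_and, Set.mem_ofPred_eq]
        refine ⟨hwU, fun b hb => ?_⟩
        by_contra hbU
        refine hw2 ⟨Sum.inl b, by simpa using hbU⟩ ?_
        rw [hTadj]
        refine ⟨fun h => hb.ne (Sum.inl_injective h), ?_⟩
        rintro a' b' h1 h2
        cases h1; cases h2; exact hb
      · exact absurd (hall i) hwU
    have hb := PMT.odd_bound T
    have hpar : T.oddComponents.ncard % 2 =
        Nat.card ((⊤ : (PMT.aug G d).Subgraph).deleteVerts U).verts % 2 := by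
      rw [Nat.odd_iff, Nat.odd_iff] at hodd
      omega
    omega
  · push Not at hall
    obtain ⟨i, hi⟩ := hall
    have hconn : ∀ x, T.Reachable x ⟨Sum.inr i, by simpa using hi⟩ := by
      intro x
      by_cases hx : x = ⟨Sum.inr i, by simpa using hi⟩
      · rw [hx]
      · refine SimpleGraph.Adj.reachable ?_
        rw [hTadj]
        refine ⟨fun h => hx (Subtype.ext h), ?_⟩
        intro a b _ h
        cases h
    have hle : T.oddComponents.ncard ≤ 1 := by
      have : Subsingleton T.ConnectedComponent :=
        SimpleGraph.Preconnected.subsingleton_connectedComponent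
          (fun x y => (hconn x).trans (hconn y).symm)
      exact Set.ncard_le_one_of_subsingleton _
    have h1 : T.oddComponents.ncard = 1 := by omega
    have h0 : U.ncard = 0 := by omega
    rw [h1] at hodd
    have := hodd.1 odd_one
    rw [Nat.odd_iff] at this
    omega
end
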